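/- arXiv:1706.01356 — 2 statements merged into one kernel-verified Lean document; each statement's English description precedes it below -/
import Mathlib

section
/- Let K be a field of characteristic different from 2, let q_2 be a Pfister form over K, and let q_1 be a Pfister neighbour of q_2. Then q_1 is stably birational to q_2, i.e. the projective quadrics associated to q_1 and q_2 are stably birational over K. -/
/-!
Two quadrics are stably birational as soon as each has a rational point over the function field of
the other: over `F = K(Q₁)`, a quadric with a rational point is rational (project from the point),
so `K(Q₁ × Q₂)` is purely transcendental over `K(Q₁)`, and by symmetry over `K(Q₂)`.

For a Pfister neighbour `q₁` of `q₂` both conditions hold. The form `q₁` is isotropic over `K(Q₁)`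
by the generic point, hence so is `q₂`, which contains a multiple of `q₁`. Conversely, over `K(Q₂)`
the Pfister form `q₂` is isotropic, hence hyperbolic: it has a totally isotropic subspace of half
the dimension. As `q₁` occupies a subspace of more than half the dimension, the two meet, and `q₁`
is isotropic.

That isotropic Pfister forms are hyperbolic is proved by induction on the number of slots together
with roundness: every nonzero value of a Pfister form is the factor of a similitude.

The argument needs at least three variables, so that the cones are integral; for
`n ≤ 1` the dimension hypothesis forces `q₁` and `q₂` to be similar.
-/

noncomputable section

/-- The `n`-fold Pfister form `⟨⟨a₁,…,aₙ⟩⟩ = ⟨1,-a₁⟩ ⊗ ⋯ ⊗ ⟨1,-aₙ⟩` over `K`, written as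
the diagonal quadratic form of dimension `2ⁿ`, indexed by `ε ∈ {0,1}ⁿ`, with weights
`∏_{i : ε_i = 1} (-a_i)`. -/
def pfisterForm {K : Type*} [Field K] {n : ℕ} (a : Fin n → K) :
    QuadraticForm K ((Fin n → Bool) → K) :=
  QuadraticMap.weightedSumSquares K fun ε : Fin n → Bool => ∏ i, if ε i then -a i else 1

/-- The homogeneous degree two polynomial associated to a quadratic form `q` on `ι → K`
(`char K ≠ 2`), whose zero locus in `ℙ(ι → K)` is the projective quadric `Q = {q = 0}`. -/
def formPoly {K : Type*} [Field K] {ι : Type*} [Fintype ι] [DecidableEq ι]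
    (q : QuadraticForm K (ι → K)) : MvPolynomial ι K :=
  (∑ i, MvPolynomial.C (q (Pi.single i 1)) * MvPolynomial.X i ^ 2) +
    MvPolynomial.C ((2 : K)⁻¹) *
      ∑ i, ∑ j, if i = j then 0 else
        MvPolynomial.C (QuadraticMap.polar q (Pi.single i 1) (Pi.single j 1)) *
          MvPolynomial.X i * MvPolynomial.X j

/-- The coordinate ring of the affine cone over the projective quadric `Q = {q = 0}`
associated to a quadratic form `q`; the cone is birational over `K` to `Q × 𝔸¹`. -/
def quadricConeRing {K : Type*} [Field K] {ι : Type*} [Fintype ι] [DecidableEq ι]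
    (q : QuadraticForm K (ι → K)) : Type _ :=
  MvPolynomial ι K ⧸ Ideal.span {formPoly q}

instance {K : Type*} [Field K] {ι : Type*} [Fintype ι] [DecidableEq ι]
    (q : QuadraticForm K (ι → K)) : CommRing (quadricConeRing q) := Ideal.Quotient.commRing _

instance {K : Type*} [Field K] {ι : Type*} [Fintype ι] [DecidableEq ι]
    (q : QuadraticForm K (ι → K)) : Algebra K (quadricConeRing q) := Ideal.Quotient.algebra K

/-- Two quadratic forms `q₁, q₂` over `K` are stably birational: the associated projective
quadrics `Q₁, Q₂` satisfy `Q₁ × ℙᵃ` birational to `Q₂ × ℙᵇ` over `K` for some `a, b ≥ 0`.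
Since the affine cone over `Q_i` is birational over `K` to `Q_i × 𝔸¹`, this says that the
two cones have `K`-isomorphic function fields after adjoining finitely many variables. -/
def StablyBirationalForms {K : Type*} [Field K] {ι₁ ι₂ : Type*}
    [Fintype ι₁] [DecidableEq ι₁] [Fintype ι₂] [DecidableEq ι₂]
    (q₁ : QuadraticForm K (ι₁ → K)) (q₂ : QuadraticForm K (ι₂ → K)) : Prop :=
  ∃ a b : ℕ,
    Nonempty (FractionRing (MvPolynomial (Fin a) (quadricConeRing q₁)) ≃ₐ[K]
      FractionRing (MvPolynomial (Fin b) (quadricConeRing q₂)))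

open scoped Matrix TensorProduct nonZeroDivisors

/-! ### Fraction rings of algebras, polynomial rings and tensor products -/

section FractionRing

variable {K R S : Type*} [Field K] [CommRing R] [CommRing S] [Algebra K R] [Algebra K S]

theorem fractionRing_equiv_of_injective {E : Type*} [Field E] [Algebra K E]
    (g : R →ₐ[K] E) (hg : Function.Injective g) (hs : ∀ z : E, ∃ x y : R, z = g x / g y) :
    Nonempty (FractionRing R ≃ₐ[K] E) := by
  let := g.toRingHom.toAlgebra
  have : IsScalarTower K R E := IsScalarTower.of_algebraMap_eq fun x => (g.commutes x).symm
  have : FaithfulSMul R E := (faithfulSMul_iff_algebraMap_injective R E).2 hg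
  have : IsFractionRing R E := IsFractionRing.of_field R E hs
  exact ⟨(FractionRing.algEquiv R E).restrictScalars K⟩

theorem isPrime_ker_and_fractionRing_equiv {E : Type*} [Field E] [Algebra K E] (g : R →ₐ[K] E)
    (hs : ∀ z : E, ∃ x y : R, z = g x / g y) :
    (RingHom.ker g).IsPrime ∧ Nonempty (FractionRing (R ⧸ RingHom.ker g) ≃ₐ[K] E) := by
  have hp : (RingHom.ker g).IsPrime := RingHom.ker_isPrime g
  refine ⟨hp, fractionRing_equiv_of_injective (Ideal.kerLiftAlg g)
    (Ideal.kerLiftAlg_injective g) fun z => ?_⟩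
  obtain ⟨x, y, rfl⟩ := hs z
  exact ⟨Ideal.Quotient.mk _ x, Ideal.Quotient.mk _ y, rfl⟩

theorem fractionRing_equiv_of_localization [Algebra R S] [IsScalarTower K R S] (M : Submonoid R)
    [IsLocalization M S] (hRS : Function.Injective (algebraMap R S)) :
    Nonempty (FractionRing R ≃ₐ[K] FractionRing S) := by
  have hM : M ≤ R⁰ := fun m hm => mem_nonZeroDivisors_of_injective hRS
    (IsLocalization.map_units S ⟨m, hm⟩).mem_nonZeroDivisors
  let := IsLocalization.localizationAlgebraOfSubmonoidLe S (FractionRing R) M R⁰ hM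
  have := IsLocalization.localization_isScalarTower_of_submonoid_le S (FractionRing R) M R⁰ hM
  have := IsFractionRing.isFractionRing_of_isLocalization M S (FractionRing R) hM
  have : IsScalarTower K S (FractionRing R) := .to₁₃₄ K R S (FractionRing R)
  exact ⟨(IsLocalization.algEquiv S⁰ (FractionRing R) (FractionRing S)).restrictScalars K⟩

theorem fractionRing_mvPolynomial_equiv (K A σ : Type*) [Field K] [CommRing A] [Algebra K A] :
    Nonempty (FractionRing (MvPolynomial σ A) ≃ₐ[K]
      FractionRing (MvPolynomial σ (FractionRing A))) := by
  let : Algebra (MvPolynomial σ A) (MvPolynomial σ (FractionRing A)) :=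
    MvPolynomial.algebraMvPolynomial
  have : IsScalarTower K (MvPolynomial σ A) (MvPolynomial σ (FractionRing A)) := by
    refine IsScalarTower.of_algebraMap_eq fun x => ?_
    rw [MvPolynomial.algebraMap_def, MvPolynomial.algebraMap_apply, MvPolynomial.algebraMap_apply,
      MvPolynomial.map_C, ← IsScalarTower.algebraMap_apply]
  exact fractionRing_equiv_of_localization (A⁰.map (MvPolynomial.C (σ := σ)))
    (MvPolynomial.map_injective _ (IsFractionRing.injective A (FractionRing A)))

theorem fractionRing_tensorProduct_equiv (K A B : Type*) [Field K] [CommRing A] [Algebra K A]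
    [CommRing B] [Algebra K B] :
    Nonempty (FractionRing (A ⊗[K] B) ≃ₐ[K] FractionRing (FractionRing A ⊗[K] B)) := by
  let F := FractionRing A
  let g : A ⊗[K] B →ₐ[K] F ⊗[K] B :=
    Algebra.TensorProduct.map (IsScalarTower.toAlgHom K A F) (AlgHom.id K B)
  have hg : Function.Injective g := Module.Flat.rTensor_preserves_injective_linearMap (M := B)
    (IsScalarTower.toAlgHom K A F).toLinearMap (IsFractionRing.injective A F)
  let : Algebra (A ⊗[K] B) (F ⊗[K] B) := g.toRingHom.toAlgebra
  have : IsScalarTower K (A ⊗[K] B) (F ⊗[K] B) :=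
    IsScalarTower.of_algebraMap_eq fun x => (g.commutes x).symm
  have : IsScalarTower A (A ⊗[K] B) (F ⊗[K] B) := by
    refine IsScalarTower.of_algebraMap_eq fun x => ?_
    change algebraMap A F x ⊗ₜ[K] 1 = g (x ⊗ₜ[K] 1)
    simp [g]
  have : IsLocalization (Algebra.algebraMapSubmonoid (A ⊗[K] B) A⁰) (F ⊗[K] B) := by
    refine IsLocalization.tensorProduct_tensorProduct K B A⁰ F ?_
    ext x
    change g (1 ⊗ₜ[K] x) = 1 ⊗ₜ[K] x
    simp [g]
  exact fractionRing_equiv_of_localization (Algebra.algebraMapSubmonoid (A ⊗[K] B) A⁰) hg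

end FractionRing

/-! ### Solving a linear equation over a domain -/

section LinearEquation

variable {P : Type*} [CommRing P]

open Polynomial (C X aeval)

theorem exists_linear_dvd_C_pow_mul_sub_C (a b : P) (p : Polynomial P) :
    ∃ (k : ℕ) (r : P), C a * X + C b ∣ C a ^ k * p - C r := by
  induction p using Polynomial.induction_on' with
  | add p q hp hq =>
    obtain ⟨k, r, c, hc⟩ := hp
    obtain ⟨l, s, d, hd⟩ := hq
    refine ⟨k + l, a ^ l * r + a ^ k * s, C a ^ l * c + C a ^ k * d, ?_⟩
    simp only [map_add, map_mul, map_pow]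
    linear_combination C a ^ l * hc + C a ^ k * hd
  | monomial n c =>
    obtain ⟨d, hd⟩ := sub_dvd_pow_sub_pow (C a * X) (-C b) n
    refine ⟨n, c * (-b) ^ n, C c * d, ?_⟩
    rw [← Polynomial.C_mul_X_pow_eq_monomial]
    simp only [map_mul, map_pow, map_neg]
    linear_combination C c * hd

theorem dvd_of_dvd_prime_pow_mul {R : Type*} [CommRing R] [IsDomain R] {a l p : R} (ha : Prime a)
    (hal : ¬ a ∣ l) {k : ℕ} (h : l ∣ a ^ k * p) : l ∣ p := by
  obtain ⟨s, hs⟩ := h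
  obtain ⟨t, rfl⟩ := ha.pow_dvd_of_dvd_mul_left k hal (Dvd.intro p hs)
  exact ⟨t, mul_left_cancel₀ (pow_ne_zero k ha.ne_zero) (by rw [hs]; ring)⟩

variable {E : Type*} [Field E] [Algebra P E] [IsFractionRing P E] {a b : P}

theorem aeval_neg_div_linear (ha : a ≠ 0) :
    aeval (-algebraMap P E b / algebraMap P E a) (C a * X + C b) = 0 := by
  have : algebraMap P E a ≠ 0 := (IsFractionRing.to_map_eq_zero_iff (K := E)).not.2 ha
  rw [map_add, map_mul, Polynomial.aeval_C, Polynomial.aeval_C, Polynomial.aeval_X]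
  field_simp
  ring

-- This is Gauss's lemma: if the prime `a` does not divide `b`, then `a X + b` is primitive.
theorem ker_aeval_neg_div [IsDomain P] (ha : Prime a) (hab : ¬ a ∣ b) :
    RingHom.ker (aeval (R := P) (-algebraMap P E b / algebraMap P E a)) =
      Ideal.span {C a * X + C b} := by
  have hroot := aeval_neg_div_linear (E := E) (b := b) ha.ne_zero
  ext p
  rw [RingHom.mem_ker, Ideal.mem_span_singleton]
  constructor
  · intro hp
    obtain ⟨k, r, hr⟩ := exists_linear_dvd_C_pow_mul_sub_C a b p
    have hr0 : r = 0 := by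
      have := zero_dvd_iff.1 (hroot ▸ map_dvd (aeval (-algebraMap P E b / algebraMap P E a)) hr)
      simpa [hp] using this
    rw [hr0, map_zero, sub_zero] at hr
    refine dvd_of_dvd_prime_pow_mul (Polynomial.prime_C_iff.2 ha) (fun h => hab ?_) hr
    rw [dvd_add_right (dvd_mul_right _ _), Polynomial.C_dvd_iff_dvd_coeff] at h
    exact Polynomial.coeff_C_zero (a := b) ▸ h 0
  · rintro ⟨c, rfl⟩
    rw [map_mul, hroot, zero_mul]

end LinearEquation

/-! ### Quadratic forms in coordinates and extension of scalars -/

section ExtendScalars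

/-- `2` stays invertible in every algebra over a field in which it is invertible. -/
abbrev invertibleTwoOfAlgebra (K A : Type*) [CommRing K] [Invertible (2 : K)] [CommRing A]
    [Algebra K A] : Invertible (2 : A) :=
  (Invertible.map (algebraMap K A) 2).copy 2 (map_ofNat _ 2).symm

variable {K ι κ : Type*} (A : Type*) [Field K] [Invertible (2 : K)] [CommRing A] [Algebra K A]
  [Fintype ι] [DecidableEq ι] [Fintype κ] [DecidableEq κ]

/-- The extension of scalars of a quadratic form in coordinates from `K` to a `K`-algebra `A`: the
form with the same Gram matrix. Taking for `A` a polynomial ring, this also describes substitution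
into the polynomial of the form. -/
def extendScalars (q : QuadraticForm K (ι → K)) : QuadraticForm A (ι → A) :=
  (q.toMatrix'.map (algebraMap K A)).toQuadraticForm'

theorem extendScalars_apply (q : QuadraticForm K (ι → K)) (x : ι → A) :
    extendScalars A q x = x ⬝ᵥ q.toMatrix'.map (algebraMap K A) *ᵥ x :=
  Matrix.toLinearMap₂'_apply' _ x x

theorem toMatrix'_extendScalars [Invertible (2 : A)] (q : QuadraticForm K (ι → K)) :
    (extendScalars A q).toMatrix' = q.toMatrix'.map (algebraMap K A) := by
  have hsymm : (q.toMatrix'.map (algebraMap K A)).IsSymm := q.isSymm_toMatrix'.map _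
  rw [extendScalars, Matrix.toQuadraticForm', QuadraticForm.toMatrix',
    QuadraticMap.associated_left_inverse, LinearMap.toMatrix'_toLinearMap₂']
  intro x y
  rw [Matrix.toLinearMap₂'_apply', Matrix.toLinearMap₂'_apply', Matrix.dotProduct_mulVec,
    ← Matrix.mulVec_transpose, hsymm, dotProduct_comm]

theorem extendScalars_extendScalars {F : Type*} [Field F] [Invertible (2 : F)] [Algebra K F]
    [Algebra F A] [IsScalarTower K F A] (q : QuadraticForm K (ι → K)) :
    extendScalars A (extendScalars F q) = extendScalars A q := by
  change ((extendScalars F q).toMatrix'.map (algebraMap F A)).toQuadraticForm' = _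
  rw [toMatrix'_extendScalars, Matrix.map_map, ← RingHom.coe_comp, ← IsScalarTower.algebraMap_eq,
    extendScalars]

theorem extendScalars_self (q : QuadraticForm K (ι → K)) : extendScalars K q = q := by
  ext x
  rw [extendScalars_apply, Algebra.algebraMap_self, RingHom.coe_id, Matrix.map_id,
    ← Matrix.toLinearMap₂'_apply', QuadraticForm.toMatrix', Matrix.toLinearMap₂'_toMatrix',
    QuadraticMap.associated_eq_self_apply]

theorem extendScalars_smul (c : K) (q : QuadraticForm K (ι → K)) :
    extendScalars A (c • q) = algebraMap K A c • extendScalars A q := by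
  have hmap : (c • q.toMatrix').map (algebraMap K A) =
      algebraMap K A c • q.toMatrix'.map (algebraMap K A) := by
    ext i j
    simp
  ext x
  rw [smul_apply, extendScalars_apply, extendScalars_apply,
    QuadraticForm.toMatrix'_smul, hmap, Matrix.smul_mulVec, dotProduct_smul]

theorem extendScalars_comp (q : QuadraticForm K (ι → K)) (J : (κ → K) →ₗ[K] ι → K) (x : κ → A) :
    extendScalars A (q.comp J) x =
      extendScalars A q ((LinearMap.toMatrix' J).map (algebraMap K A) *ᵥ x) := by
  rw [extendScalars_apply, extendScalars_apply, QuadraticForm.toMatrix',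
    QuadraticMap.associated_comp, LinearMap.toMatrix₂'_compl₁₂, Matrix.map_mul, Matrix.map_mul,
    Matrix.transpose_map, ← Matrix.mulVec_mulVec, ← Matrix.mulVec_mulVec,
    Matrix.dotProduct_mulVec x, Matrix.vecMul_transpose, QuadraticForm.toMatrix']

theorem toMatrix'_apply_self (q : QuadraticForm K (ι → K)) (i : ι) :
    q.toMatrix' i i = q (Pi.single i 1) := by
  rw [QuadraticForm.toMatrix', LinearMap.toMatrix₂'_apply, QuadraticMap.associated_eq_self_apply]

theorem toMatrix'_apply_eq_polar (q : QuadraticForm K (ι → K)) (i j : ι) :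
    q.toMatrix' i j = 2⁻¹ * QuadraticMap.polar q (Pi.single i 1) (Pi.single j 1) := by
  rw [QuadraticForm.toMatrix', LinearMap.toMatrix₂'_apply, QuadraticMap.associated_apply]
  simp [QuadraticMap.polar]

theorem aeval_formPoly (q : QuadraticForm K (ι → K)) (x : ι → A) :
    MvPolynomial.aeval x (formPoly q) = extendScalars A q x := by
  have entry (i j : ι) : x i * (algebraMap K A (q.toMatrix' i j) * x j) =
      (if i = j then algebraMap K A (q (Pi.single i 1)) * x i ^ 2 else 0) +
        algebraMap K A 2⁻¹ * if i = j then 0 else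
          algebraMap K A (QuadraticMap.polar q (Pi.single i 1) (Pi.single j 1)) * x i * x j := by
    split_ifs with hij
    · rw [← hij, toMatrix'_apply_self]
      ring
    · rw [toMatrix'_apply_eq_polar, map_mul]
      ring
  simp only [formPoly, extendScalars_apply, dotProduct, Matrix.mulVec, Matrix.map_apply,
    Finset.mul_sum, entry, Finset.sum_add_distrib, map_add, map_mul, map_sum,
    apply_ite (MvPolynomial.aeval x), map_zero,
    map_pow, MvPolynomial.aeval_C, MvPolynomial.aeval_X, Finset.sum_ite_eq, Finset.mem_univ,
    if_true]

theorem nondegenerate_iff_det_toMatrix'_ne_zero (q : QuadraticForm K (ι → K)) :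
    q.Nondegenerate ↔ q.toMatrix'.det ≠ 0 := by
  rw [← QuadraticMap.nondegenerate_associated_iff, ← LinearMap.nondegenerate_toMatrix₂'_iff,
    ← Matrix.nondegenerate_iff_det_ne_zero, QuadraticForm.toMatrix']

variable {F : Type*} [Field F] [Algebra K F]

theorem nondegenerate_extendScalars [Invertible (2 : F)] {q : QuadraticForm K (ι → K)}
    (hq : q.Nondegenerate) : (extendScalars F q).Nondegenerate := by
  rw [nondegenerate_iff_det_toMatrix'_ne_zero] at hq ⊢
  rw [toMatrix'_extendScalars, ← RingHom.mapMatrix_apply, ← RingHom.map_det]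
  exact (map_ne_zero _).2 hq

theorem exists_injective_extendScalars {q : QuadraticForm K (ι → K)}
    {q' : QuadraticForm K (κ → K)} {c : K} (J : (κ → K) →ₗ[K] ι → K) (hJ : Function.Injective J)
    (h : q.comp J = c • q') :
    ∃ J' : (κ → F) →ₗ[F] ι → F, Function.Injective J' ∧
      ∀ x, extendScalars F q (J' x) = algebraMap K F c * extendScalars F q' x := by
  obtain ⟨L, hL⟩ := J.exists_leftInverse_of_injective (LinearMap.ker_eq_bot.2 hJ)
  refine ⟨((LinearMap.toMatrix' J).map (algebraMap K F)).mulVecLin, ?_, fun x => ?_⟩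
  · refine Function.LeftInverse.injective
      (g := ((LinearMap.toMatrix' L).map (algebraMap K F)).mulVecLin) fun x => ?_
    rw [Matrix.mulVecLin_apply, Matrix.mulVecLin_apply, Matrix.mulVec_mulVec, ← Matrix.map_mul,
      ← LinearMap.toMatrix'_comp, hL, LinearMap.toMatrix'_id, Matrix.map_one _ (map_zero _)
      (map_one _), Matrix.one_mulVec]
  · rw [Matrix.mulVecLin_apply, ← extendScalars_comp, h, extendScalars_smul, smul_apply,
      smul_eq_mul]

theorem toMatrix'_weightedSumSquares (w : ι → K) :
    QuadraticForm.toMatrix' (QuadraticMap.weightedSumSquares K w) = Matrix.diagonal w := by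
  ext i j
  rcases eq_or_ne i j with rfl | hij
  · simp [toMatrix'_apply_self, QuadraticMap.weightedSumSquares_apply, Pi.single_apply]
  · simp [toMatrix'_apply_eq_polar, QuadraticMap.polar, QuadraticMap.weightedSumSquares_apply,
      Pi.single_apply, hij, hij.symm, mul_add, Finset.sum_add_distrib]

theorem extendScalars_weightedSumSquares (w : ι → K) :
    extendScalars A (QuadraticMap.weightedSumSquares K w) =
      QuadraticMap.weightedSumSquares A (algebraMap K A ∘ w) := by
  ext x
  rw [extendScalars_apply, toMatrix'_weightedSumSquares, Matrix.diagonal_map (map_zero _),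
    QuadraticMap.weightedSumSquares_apply]
  simp only [dotProduct, Matrix.mulVec_diagonal, Function.comp_apply, smul_eq_mul]
  exact Finset.sum_congr rfl fun i _ => by ring

end ExtendScalars

/-! ### The cone over a quadric -/

section Cone

open MvPolynomial (X aeval)

theorem aeval_mulVec_X {R A ι κ : Type*} [CommSemiring R] [CommSemiring A] [Algebra R A]
    [Fintype κ] (M : Matrix ι κ R) (x : κ → A) (i : ι) :
    aeval x ((M.map (algebraMap R (MvPolynomial κ R)) *ᵥ X) i) =
      (M.map (algebraMap R A) *ᵥ x) i := by
  simp [Matrix.mulVec, dotProduct]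

variable {K ι κ : Type*} [Field K] [Fintype ι] [DecidableEq ι] [Fintype κ] [DecidableEq κ]

theorem aeval_toMatrix'_comp_eq_id {S : (κ → K) →ₗ[K] ι → K} {T : (ι → K) →ₗ[K] κ → K}
    (h : S ∘ₗ T = LinearMap.id) :
    (aeval ((LinearMap.toMatrix' T).map (algebraMap K (MvPolynomial ι K)) *ᵥ X)).comp
        (aeval ((LinearMap.toMatrix' S).map (algebraMap K (MvPolynomial κ K)) *ᵥ X)) =
      AlgHom.id K (MvPolynomial ι K) := by
  ext i : 1
  rw [AlgHom.comp_apply, MvPolynomial.aeval_X, aeval_mulVec_X, Matrix.mulVec_mulVec,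
    ← Matrix.map_mul, ← LinearMap.toMatrix'_comp, h, LinearMap.toMatrix'_id,
    Matrix.map_one _ (map_zero _) (map_one _), Matrix.one_mulVec, AlgHom.id_apply]

/-- The change of variables `f ↦ f ∘ T` in the polynomial ring, for an invertible linear map `T` of
the underlying affine spaces. -/
def linearSubst (T : (κ → K) ≃ₗ[K] ι → K) : MvPolynomial ι K ≃ₐ[K] MvPolynomial κ K :=
  AlgEquiv.ofAlgHom
    (aeval ((LinearMap.toMatrix' T.toLinearMap).map (algebraMap K (MvPolynomial κ K)) *ᵥ X))
    (aeval ((LinearMap.toMatrix' T.symm.toLinearMap).map (algebraMap K (MvPolynomial ι K)) *ᵥ X))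
    (aeval_toMatrix'_comp_eq_id T.symm_comp) (aeval_toMatrix'_comp_eq_id T.comp_symm)

variable [Invertible (2 : K)]

theorem formPoly_eq_extendScalars (q : QuadraticForm K (ι → K)) :
    formPoly q = extendScalars (MvPolynomial ι K) q X := by
  rw [← aeval_formPoly, MvPolynomial.aeval_X_left_apply]

theorem linearSubst_formPoly (T : (κ → K) ≃ₗ[K] ι → K) (q : QuadraticForm K (ι → K)) :
    linearSubst T (formPoly q) = formPoly (q.comp T.toLinearMap) := by
  rw [formPoly_eq_extendScalars (q.comp _), extendScalars_comp, ← aeval_formPoly]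
  rfl

theorem formPoly_smul (c : K) (q : QuadraticForm K (ι → K)) :
    formPoly (c • q) = MvPolynomial.C c * formPoly q := by
  rw [formPoly_eq_extendScalars, extendScalars_smul, formPoly_eq_extendScalars, smul_apply,
    smul_eq_mul, MvPolynomial.algebraMap_eq]

theorem map_formPoly {F : Type*} [Field F] [Invertible (2 : F)] [Algebra K F]
    (q : QuadraticForm K (ι → K)) :
    MvPolynomial.map (algebraMap K F) (formPoly q) = formPoly (extendScalars F q) := by
  rw [← MvPolynomial.aeval_X_left_apply (MvPolynomial.map _ _), MvPolynomial.aeval_map_algebraMap,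
    aeval_formPoly, formPoly_eq_extendScalars, extendScalars_extendScalars]

theorem quadricConeRing_equiv_of_similar {q : QuadraticForm K (ι → K)}
    {q' : QuadraticForm K (κ → K)} (T : (κ → K) ≃ₗ[K] ι → K) {c : K} (hc : c ≠ 0)
    (h : q.comp T.toLinearMap = c • q') :
    Nonempty (quadricConeRing q ≃ₐ[K] quadricConeRing q') := by
  refine ⟨Ideal.quotientEquivAlg _ _ (linearSubst T) ?_⟩
  rw [Ideal.map_span, Set.image_singleton]
  refine (Ideal.span_singleton_mul_left_unit ((IsUnit.mk0 c hc).map MvPolynomial.C) _).symm.trans ?_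
  rw [← formPoly_smul, ← h, ← linearSubst_formPoly]
  rfl

theorem tensor_quadricConeRing_equiv (F : Type*) [Field F] [Invertible (2 : F)] [Algebra K F]
    (q : QuadraticForm K (ι → K)) :
    Nonempty ((F ⊗[K] quadricConeRing q) ≃ₐ[F] quadricConeRing (extendScalars F q)) := by
  refine ⟨(Algebra.TensorProduct.tensorQuotientEquiv F (MvPolynomial ι K) F _).trans
    (Ideal.quotientEquivAlg _ _ (MvPolynomial.algebraTensorAlgEquiv K F) ?_)⟩
  rw [Ideal.map_span, Set.image_singleton, Ideal.map_span, Set.image_singleton, ← map_formPoly]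
  congr 2
  simp

end Cone

/-! ### Rationality of isotropic quadrics -/

section Isotropic

theorem two_mul_finrank_le_of_totally_isotropic {F V : Type*} [Field F] [Invertible (2 : F)]
    [AddCommGroup V] [Module F V] [FiniteDimensional F V] {q : QuadraticForm F V}
    (hq : q.Nondegenerate) {W : Submodule F V} (hW : ∀ w ∈ W, q w = 0) :
    2 * Module.finrank F W ≤ Module.finrank F V := by
  have hortho : W ≤ LinearMap.BilinForm.orthogonal q.polarBilin W := fun x hx y hy => by
    simp [QuadraticMap.polar, hW _ hx, hW _ hy, hW _ (add_mem hy hx)]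
  have hle := Submodule.finrank_mono hortho
  rw [LinearMap.BilinForm.finrank_orthogonal (QuadraticMap.nondegenerate_polar_iff.2 hq)] at hle
  have := W.finrank_le
  omega

theorem exists_polar_eq_zero_and_apply_ne_zero {F V : Type*} [Field F] [Invertible (2 : F)]
    [AddCommGroup V] [Module F V] {q : QuadraticForm F V} (hq : q.Nondegenerate)
    (hV : 3 ≤ Module.finrank F V) (e : V) : ∃ z, QuadraticMap.polar q e z = 0 ∧ q z ≠ 0 := by
  by_contra! hcon
  have : FiniteDimensional F V := Module.finite_of_finrank_pos (by omega)
  have hker := two_mul_finrank_le_of_totally_isotropic hq (W := (q.polarBilin e).ker) hcon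
  have hrank := (q.polarBilin e).finrank_range_add_finrank_ker
  have hrange := (q.polarBilin e).range.finrank_le
  rw [Module.finrank_self] at hrange
  omega

theorem exists_linearEquiv_apply_eq {F V W : Type*} [Field F] [AddCommGroup V] [Module F V]
    [FiniteDimensional F V] [AddCommGroup W] [Module F W]
    (h : Module.finrank F V = Module.finrank F W) {v : V} (hv : v ≠ 0) {w : W} (hw : w ≠ 0) :
    ∃ T : V ≃ₗ[F] W, T v = w := by
  have : Nontrivial V := ⟨v, 0, hv⟩
  have : FiniteDimensional F W := Module.finite_of_finrank_pos (h ▸ Module.finrank_pos)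
  let e := LinearEquiv.ofFinrankEq V W h
  have hev : e v ≠ 0 := e.map_ne_zero_iff.2 hv
  obtain ⟨g, hg⟩ := Submodule.exists_linearEquiv_restrict_eq
    ((LinearEquiv.toSpanNonzeroSingleton F W (e v) hev).symm ≪≫ₗ
      LinearEquiv.toSpanNonzeroSingleton F W w hw)
  refine ⟨e ≪≫ₗ g, ?_⟩
  rw [LinearEquiv.trans_apply, ← hg ⟨e v, Submodule.mem_span_singleton_self _⟩,
    ← LinearEquiv.toSpanNonzeroSingleton_one F W (e v) hev, LinearEquiv.trans_apply,
    LinearEquiv.symm_apply_apply, LinearEquiv.toSpanNonzeroSingleton_one]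

theorem nondegenerate_comp_linearEquiv {F V W : Type*} [Field F] [Invertible (2 : F)]
    [AddCommGroup V] [Module F V] [AddCommGroup W] [Module F W] {q : QuadraticForm F W}
    (hq : q.Nondegenerate) (T : V ≃ₗ[F] W) :
    (q.comp T.toLinearMap).Nondegenerate := by
  have := LinearMap.BilinForm.Nondegenerate.congr T.symm (QuadraticMap.nondegenerate_polar_iff.2 hq)
  rw [← QuadraticMap.nondegenerate_polar_iff, QuadraticMap.polarBilin_comp]
  exact this

theorem map_comp_single {A B ι G : Type*} [MulZeroOneClass A] [MulZeroOneClass B] [DecidableEq ι]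
    [FunLike G A B] [MonoidWithZeroHomClass G A B] (f : G) (i : ι) :
    f ∘ Pi.single i (1 : A) = Pi.single i 1 := by
  ext j
  rw [Function.comp_apply, Pi.apply_single (fun _ => f) fun _ => map_zero f, map_one]

section Substitution

variable {K ι A B : Type*} [Field K] [Invertible (2 : K)] [Fintype ι] [DecidableEq ι] [CommRing A]
  [Algebra K A] [CommRing B] [Algebra K B]

theorem extendScalars_algHom (f : A →ₐ[K] B) (q : QuadraticForm K (ι → K)) (x : ι → A) :
    extendScalars B q (f ∘ x) = f (extendScalars A q x) := by
  rw [← aeval_formPoly, ← aeval_formPoly, MvPolynomial.comp_aeval_apply]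
  rfl

theorem polar_extendScalars_algHom (f : A →ₐ[K] B) (q : QuadraticForm K (ι → K)) (x y : ι → A) :
    QuadraticMap.polar (extendScalars B q) (f ∘ x) (f ∘ y) =
      f (QuadraticMap.polar (extendScalars A q) x y) := by
  have hadd : f ∘ x + f ∘ y = f ∘ (x + y) := funext fun i => (map_add f (x i) (y i)).symm
  simp only [QuadraticMap.polar, map_sub, hadd, extendScalars_algHom]

theorem extendScalars_single (q : QuadraticForm K (ι → K)) (i : ι) :
    extendScalars A q (Pi.single i 1) = algebraMap K A (q (Pi.single i 1)) := by
  have := extendScalars_algHom (Algebra.ofId K A) q (Pi.single i 1)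
  rwa [map_comp_single, extendScalars_self] at this

theorem polar_extendScalars_single (q : QuadraticForm K (ι → K)) (i j : ι) :
    QuadraticMap.polar (extendScalars A q) (Pi.single i 1) (Pi.single j 1) =
      algebraMap K A (QuadraticMap.polar q (Pi.single i 1) (Pi.single j 1)) := by
  have := polar_extendScalars_algHom (Algebra.ofId K A) q (Pi.single i 1) (Pi.single j 1)
  rwa [map_comp_single, map_comp_single, extendScalars_self] at this

end Substitution

variable {F σ : Type*} [Field F] [Invertible (2 : F)] [Fintype σ] [DecidableEq σ]

open MvPolynomial (X optionEquivLeft aeval)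

theorem optionEquivLeft_formPoly {q : QuadraticForm F (Option σ → F)}
    (hq : q (Pi.single none 1) = 0) :
    optionEquivLeft F σ (formPoly q) =
      Polynomial.C (QuadraticMap.polar (extendScalars (MvPolynomial σ F) q)
        (Pi.single none 1) (Option.elim · 0 X)) * Polynomial.X +
      Polynomial.C (extendScalars (MvPolynomial σ F) q (Option.elim · 0 X)) := by
  let c : MvPolynomial σ F →ₐ[F] Polynomial (MvPolynomial σ F) := Polynomial.CAlgHom
  let v : Option σ → MvPolynomial σ F := (Option.elim · 0 X)
  have hX : optionEquivLeft F σ ∘ X =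
      (Polynomial.X : Polynomial (MvPolynomial σ F)) • Pi.single none 1 + c ∘ v := by
    ext1 i
    cases i <;> simp [v, c, Polynomial.CAlgHom]
  rw [formPoly_eq_extendScalars]
  refine (extendScalars_algHom (optionEquivLeft F σ).toAlgHom q X).symm.trans ?_
  refine (congrArg _ hX).trans ?_
  rw [QuadraticMap.map_add (extendScalars _ q), QuadraticMap.map_smul,
    QuadraticMap.polar_smul_left, extendScalars_single, hq, map_zero, smul_zero, zero_add,
    ← map_comp_single c none, polar_extendScalars_algHom, extendScalars_algHom, smul_eq_mul,
    add_comm, mul_comm]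
  rfl

theorem polar_extendScalars_single_none (q : QuadraticForm F (Option σ → F)) :
    QuadraticMap.polar (extendScalars (MvPolynomial σ F) q) (Pi.single none 1)
        (Option.elim · 0 X) =
      MvPolynomial.sumSMulX (Finsupp.equivFunOnFinite.symm fun i : σ =>
        QuadraticMap.polar q (Pi.single none 1) (Pi.single (some i) 1)) := by
  have hv : (Option.elim · 0 X : Option σ → MvPolynomial σ F) =
      ∑ i : σ, (X i : MvPolynomial σ F) • Pi.single (some i) 1 := by
    ext1 i
    cases i <;> simp [Pi.single_apply]
  rw [hv, ← QuadraticMap.polarBilin_apply_apply, map_sum, MvPolynomial.sumSMulX,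
    Finsupp.linearCombination_apply, Finsupp.sum_fintype _ _ (by simp)]
  refine Finset.sum_congr rfl fun i _ => ?_
  rw [map_smul, QuadraticMap.polarBilin_apply_apply, polar_extendScalars_single, smul_eq_mul,
    mul_comm, ← Algebra.smul_def]
  rfl

theorem prime_polar_extendScalars_single_none {q : QuadraticForm F (Option σ → F)}
    (hq : q.Nondegenerate) (hq0 : q (Pi.single none 1) = 0) :
    Prime (QuadraticMap.polar (extendScalars (MvPolynomial σ F) q) (Pi.single none 1)
      (Option.elim · 0 X)) := by
  obtain ⟨i, hi⟩ : ∃ i : σ,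
      QuadraticMap.polar q (Pi.single none 1) (Pi.single (some i) 1) ≠ 0 := by
    by_contra! hcon
    have hker : q.polarBilin (Pi.single none 1) = 0 := by
      refine LinearMap.pi_ext' fun i => LinearMap.ext_ring ?_
      cases i with
      | none => simp [hq0]
      | some i => simpa using hcon i
    have := (QuadraticMap.nondegenerate_polar_iff.2 hq).1 (Pi.single none 1) fun y => by
      rw [hker, LinearMap.zero_apply]
    simpa using congrFun this none
  rw [polar_extendScalars_single_none]
  refine (MvPolynomial.irreducible_sumSMulX _ ⟨i, Finsupp.mem_support_iff.2 hi⟩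
    fun r hr => isUnit_of_dvd_unit (hr i) (IsUnit.mk0 _ hi)).prime

theorem not_polar_dvd_extendScalars {q : QuadraticForm F (Option σ → F)} {z : Option σ → F}
    (hq0 : q (Pi.single none 1) = 0) (hz : QuadraticMap.polar q (Pi.single none 1) z = 0)
    (hqz : q z ≠ 0) :
    ¬ QuadraticMap.polar (extendScalars (MvPolynomial σ F) q) (Pi.single none 1)
      (Option.elim · 0 X) ∣ extendScalars (MvPolynomial σ F) q (Option.elim · 0 X) := by
  intro hdvd
  let y : Option σ → F := z - z none • Pi.single none 1
  have hy : QuadraticMap.polar q (Pi.single none 1) y = 0 := by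
    simp [y, QuadraticMap.polar_sub_right, hz, hq0]
  have hqy : q y = q z := by
    rw [show y = z + (-z none) • Pi.single none 1 by rw [neg_smul, ← sub_eq_add_neg],
      QuadraticMap.map_add q, QuadraticMap.map_smul, hq0, QuadraticMap.polar_smul_right,
      QuadraticMap.polar_comm, hz, smul_zero, smul_zero, add_zero, add_zero]
  let ev : MvPolynomial σ F →ₐ[F] F := aeval fun i => z (some i)
  have hev : ev ∘ (Option.elim · 0 X : Option σ → MvPolynomial σ F) = y := by
    ext1 i
    cases i <;> simp [ev, y]
  have := map_dvd ev hdvd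
  rw [← polar_extendScalars_algHom, ← extendScalars_algHom, hev, map_comp_single,
    extendScalars_self, hy, hqy, zero_dvd_iff] at this
  exact hqz this

-- With an isotropic vector at the first coordinate, the form is linear in the first variable.
theorem isDomain_and_fractionRing_quadricConeRing_option {q : QuadraticForm F (Option σ → F)}
    (hq : q.Nondegenerate) (hq0 : q (Pi.single none 1) = 0) (hσ : 2 ≤ Fintype.card σ) :
    IsDomain (quadricConeRing q) ∧ Nonempty (FractionRing (quadricConeRing q) ≃ₐ[F]
      FractionRing (MvPolynomial σ F)) := by
  let E := FractionRing (MvPolynomial σ F)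
  obtain ⟨z, hz, hqz⟩ := exists_polar_eq_zero_and_apply_ne_zero hq
    (by rw [Module.finrank_fintype_fun_eq_card, Fintype.card_option]; omega) (Pi.single none 1)
  let Φ := optionEquivLeft F σ
  have hker := ker_aeval_neg_div (E := E) (prime_polar_extendScalars_single_none hq hq0)
    (not_polar_dvd_extendScalars hq0 hz hqz)
  rw [← optionEquivLeft_formPoly hq0] at hker
  set g := Polynomial.aeval (R := MvPolynomial σ F) (_ : E)
  let G : MvPolynomial (Option σ) F →ₐ[F] E := (g.restrictScalars F).comp Φ.toAlgHom
  have hG : RingHom.ker G = Ideal.span {formPoly q} := by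
    ext p
    have := SetLike.ext_iff.1 hker (Φ p)
    rwa [Ideal.mem_span_singleton, map_dvd_iff, ← Ideal.mem_span_singleton] at this
  have hsurj (w : E) : ∃ x y, w = G x / G y := by
    obtain ⟨x, y, -, rfl⟩ := IsFractionRing.div_surjective (A := MvPolynomial σ F) w
    refine ⟨Φ.symm (Polynomial.C x), Φ.symm (Polynomial.C y), ?_⟩
    simp [G, g]
  obtain ⟨hprime, hiso⟩ := isPrime_ker_and_fractionRing_equiv G hsurj
  rw [hG] at hprime hiso
  exact ⟨Ideal.Quotient.isDomain _, hiso⟩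

theorem isDomain_and_fractionRing_quadricConeRing_of_isotropic {ι : Type*} [Fintype ι]
    [DecidableEq ι] {q : QuadraticForm F (ι → F)} (hq : q.Nondegenerate)
    (hiso : ¬ q.Anisotropic) (hι : 3 ≤ Fintype.card ι) :
    IsDomain (quadricConeRing q) ∧ ∃ n : ℕ, Nonempty (FractionRing (quadricConeRing q) ≃ₐ[F]
      FractionRing (MvPolynomial (Fin n) F)) := by
  obtain ⟨v, hv, hqv⟩ := (QuadraticMap.not_anisotropic_iff_exists q).1 hiso
  obtain ⟨n, hn⟩ := Nat.exists_eq_succ_of_ne_zero (by omega : Fintype.card ι ≠ 0)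
  obtain ⟨T, hT⟩ := exists_linearEquiv_apply_eq (F := F) (V := Option (Fin n) → F) (W := ι → F)
    (v := Pi.single none 1) (by simp [hn]) (by simp) hv
  obtain ⟨e⟩ := quadricConeRing_equiv_of_similar T one_ne_zero
    (one_smul F (q.comp T.toLinearMap)).symm
  obtain ⟨hdom, ⟨f⟩⟩ := isDomain_and_fractionRing_quadricConeRing_option
    (nondegenerate_comp_linearEquiv hq T) (by simp [hT, hqv]) (by rw [Fintype.card_fin]; omega)
  exact ⟨e.toMulEquiv.isDomain _, n, ⟨(IsFractionRing.algEquivOfAlgEquiv e).trans f⟩⟩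

end Isotropic

/-! ### Stable birationality from mutual isotropy -/

section FunctionField

theorem not_anisotropic_of_isAlgClosed {F V : Type*} [Field F] [IsAlgClosed F] [AddCommGroup V]
    [Module F V] (q : QuadraticForm F V) (hV : 2 ≤ Module.finrank F V) : ¬ q.Anisotropic := by
  intro hq
  have : Nontrivial V := Module.nontrivial_of_finrank_pos (R := F) (by omega)
  obtain ⟨x, hx⟩ := exists_ne (0 : V)
  obtain ⟨y, hxy⟩ := exists_linearIndependent_pair_of_one_lt_finrank (R := F) (by omega) hx
  have hqx : q x ≠ 0 := fun h => hx (hq x h)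
  obtain ⟨t, ht⟩ := IsAlgClosed.exists_root
    (.C (q x) * .X ^ 2 + .C (QuadraticMap.polar q x y) * .X + .C (q y) : Polynomial F)
    (by rw [Polynomial.degree_quadratic hqx]; decide)
  have hzero : q (t • x + y) = 0 := by
    rw [QuadraticMap.map_add q, QuadraticMap.map_smul, QuadraticMap.polar_smul_left, ← ht.eq_zero]
    simp only [Polynomial.eval_add, Polynomial.eval_mul, Polynomial.eval_C, Polynomial.eval_pow,
      Polynomial.eval_X, smul_eq_mul]
    ring
  have := LinearIndependent.pair_iff.1 hxy t 1 (by rw [one_smul, hq _ hzero])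
  exact one_ne_zero this.2

variable {K ι : Type*} [Field K] [Invertible (2 : K)] [Fintype ι] [DecidableEq ι]
  {q : QuadraticForm K (ι → K)}

theorem isDomain_quadricConeRing (hq : q.Nondegenerate) (hι : 3 ≤ Fintype.card ι) :
    IsDomain (quadricConeRing q) := by
  let L := AlgebraicClosure K
  let _ : Invertible (2 : L) := invertibleTwoOfAlgebra K L
  have hiso : ¬ (extendScalars L q).Anisotropic := not_anisotropic_of_isAlgClosed _ (by
    rw [Module.finrank_fintype_fun_eq_card]
    omega)
  have := (isDomain_and_fractionRing_quadricConeRing_of_isotropic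
    (nondegenerate_extendScalars hq) hiso hι).1
  obtain ⟨e⟩ := tensor_quadricConeRing_equiv L q
  have := e.toMulEquiv.isDomain (quadricConeRing (extendScalars L q))
  have : Module.Flat K (quadricConeRing q) :=
    inferInstanceAs (Module.Flat K (MvPolynomial ι K ⧸ Ideal.span {formPoly q}))
  exact Function.Injective.isDomain
    (Algebra.TensorProduct.includeRight :
      quadricConeRing q →ₐ[K] L ⊗[K] quadricConeRing q).toRingHom
    (Algebra.TensorProduct.includeRight_injective (algebraMap K L).injective)

theorem fractionRing_tensor_quadricConeRing_equiv {A : Type*} [CommRing A] [IsDomain A]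
    [Algebra K A] (hq : q.Nondegenerate) (hι : 3 ≤ Fintype.card ι)
    (hiso : ¬ (extendScalars (FractionRing A) q).Anisotropic) :
    ∃ n : ℕ, Nonempty (FractionRing (A ⊗[K] quadricConeRing q) ≃ₐ[K]
      FractionRing (MvPolynomial (Fin n) A)) := by
  let F := FractionRing A
  let _ : Invertible (2 : F) := invertibleTwoOfAlgebra K F
  obtain ⟨-, n, ⟨e_rational⟩⟩ := isDomain_and_fractionRing_quadricConeRing_of_isotropic
    (nondegenerate_extendScalars hq) hiso hι
  obtain ⟨e_cone⟩ := tensor_quadricConeRing_equiv F q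
  obtain ⟨e_tensor⟩ := fractionRing_tensorProduct_equiv K A (quadricConeRing q)
  obtain ⟨e_polynomial⟩ := fractionRing_mvPolynomial_equiv K A (Fin n)
  let e : FractionRing (F ⊗[K] quadricConeRing q) ≃ₐ[F] FractionRing (MvPolynomial (Fin n) F) :=
    (IsFractionRing.algEquivOfAlgEquiv e_cone).trans e_rational
  exact ⟨n, ⟨(e_tensor.trans (e.restrictScalars K)).trans e_polynomial.symm⟩⟩

theorem not_formPoly_dvd_X (q : QuadraticForm K (ι → K)) (i : ι) :
    ¬ formPoly q ∣ MvPolynomial.X i := by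
  intro hdvd
  let x : ι → Polynomial K := (Polynomial.X : Polynomial K) • Pi.single i 1
  have hx : x i = Polynomial.X := by simp [x]
  have h := map_dvd (MvPolynomial.aeval x) hdvd
  rw [aeval_formPoly, QuadraticMap.map_smul, MvPolynomial.aeval_X, hx, smul_eq_mul, mul_assoc] at h
  replace h := (mul_dvd_mul_iff_left Polynomial.X_ne_zero).1 (h.trans (mul_one _).symm.dvd)
  exact Polynomial.not_isUnit_X (isUnit_of_dvd_one (dvd_of_mul_right_dvd h))

/-- The generic point of the cone is an isotropic vector. -/
theorem not_anisotropic_extendScalars_fractionRing [Nonempty ι] :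
    ¬ (extendScalars (FractionRing (quadricConeRing q)) q).Anisotropic := by
  let g : MvPolynomial ι K →ₐ[K] FractionRing (quadricConeRing q) :=
    (IsScalarTower.toAlgHom K (quadricConeRing q) _).comp (Ideal.Quotient.mkₐ K _)
  have hg (p : MvPolynomial ι K) : g p = 0 ↔ formPoly q ∣ p := by
    refine (IsFractionRing.to_map_eq_zero_iff (R := quadricConeRing q)).trans ?_
    exact Ideal.Quotient.eq_zero_iff_dvd _ _
  intro h
  have hgX : g ∘ MvPolynomial.X = 0 := h _ (by
    rw [extendScalars_algHom, ← formPoly_eq_extendScalars, hg])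
  have i := Classical.arbitrary ι
  exact not_formPoly_dvd_X q i ((hg _).1 (congrFun hgX i))

theorem stablyBirationalForms_of_mutually_isotropic {κ : Type*} [Fintype κ] [DecidableEq κ]
    {q' : QuadraticForm K (κ → K)} (hq : q.Nondegenerate) (hq' : q'.Nondegenerate)
    (hι : 3 ≤ Fintype.card ι) (hκ : 3 ≤ Fintype.card κ)
    (h : ¬ (extendScalars (FractionRing (quadricConeRing q)) q').Anisotropic)
    (h' : ¬ (extendScalars (FractionRing (quadricConeRing q')) q).Anisotropic) :
    StablyBirationalForms q q' := by
  have := isDomain_quadricConeRing hq hι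
  have := isDomain_quadricConeRing hq' hκ
  obtain ⟨a, ⟨e⟩⟩ := fractionRing_tensor_quadricConeRing_equiv hq' hκ h
  obtain ⟨b, ⟨e'⟩⟩ := fractionRing_tensor_quadricConeRing_equiv hq hι h'
  exact ⟨a, b, ⟨(e.symm.trans (IsFractionRing.algEquivOfAlgEquiv
    (Algebra.TensorProduct.comm K (quadricConeRing q) (quadricConeRing q')))).trans e'⟩⟩

end FunctionField

/-! ### Round forms and isotropic Pfister forms -/

section Round

variable {F V V' : Type*} [Field F] [AddCommGroup V] [Module F V] [AddCommGroup V'] [Module F V']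
  {Q : QuadraticForm F V}

/-- A round quadratic form: every nonzero value is the factor of a similitude of the form with
itself. -/
def IsRound (Q : QuadraticForm F V) : Prop :=
  ∀ x, Q x ≠ 0 → ∃ M : V ≃ₗ[F] V, ∀ w, Q (M w) = Q x * Q w

/-- The form has a totally isotropic subspace of half the dimension; for nondegenerate forms this
says that the form is hyperbolic. -/
def HasLagrangian (Q : QuadraticForm F V) : Prop :=
  ∃ W : Submodule F V, (∀ w ∈ W, Q w = 0) ∧ 2 * Module.finrank F W = Module.finrank F V

/-- The form `Q ⊗ ⟨1, -a⟩`, realised on `V × V` as `(x, y) ↦ Q x - a * Q y`. -/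
def doubleForm (Q : QuadraticForm F V) (a : F) : QuadraticForm F (V × V) :=
  QuadraticMap.prod Q (-a • Q)

theorem doubleForm_apply (Q : QuadraticForm F V) (a : F) (x : V × V) :
    doubleForm Q a x = Q x.1 - a * Q x.2 := by
  rw [doubleForm, QuadraticMap.prod_apply, smul_apply, smul_eq_mul, neg_mul, sub_eq_add_neg]

theorem IsRound.comp_linearEquiv (h : IsRound Q) (e : V' ≃ₗ[F] V) :
    IsRound (Q.comp e.toLinearMap) := by
  intro x hx
  obtain ⟨M, hM⟩ := h (e x) hx
  exact ⟨(e.trans M).trans e.symm, fun w => by simp [hM]⟩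

theorem HasLagrangian.comp_linearEquiv (h : HasLagrangian Q) (e : V' ≃ₗ[F] V) :
    HasLagrangian (Q.comp e.toLinearMap) := by
  obtain ⟨W, hW, hdim⟩ := h
  refine ⟨W.comap e.toLinearMap, fun w hw => hW _ hw, ?_⟩
  rw [e.finrank_eq, ← hdim, Submodule.comap_equiv_eq_map_symm, e.symm.finrank_map_eq]

theorem injective_of_similitude (hQ : Q.Nondegenerate) {d : F} (hd : d ≠ 0) (M : V →ₗ[F] V)
    (hM : ∀ w, Q (M w) = d * Q w) : Function.Injective M := by
  refine (injective_iff_map_eq_zero M).2 fun x hx => ?_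
  have htrans (y : V) : Q (x + y) = Q y :=
    mul_left_cancel₀ hd (by rw [← hM, ← hM, map_add, hx, zero_add])
  have hrad : x ∈ Q.radical :=
    QuadraticMap.mem_radical_iff'.2 ⟨by simpa using htrans 0, htrans⟩
  rwa [hQ.radical_eq_bot, Submodule.mem_bot] at hrad

theorem IsRound.exists_adjoint_similitudes (h : IsRound Q) (x : V) :
    ∃ A A' : V →ₗ[F] V, (∀ w, Q (A w) = Q x * Q w) ∧ (∀ w, Q (A' w) = Q x * Q w) ∧
      ∀ u w, QuadraticMap.polar Q (A u) w = QuadraticMap.polar Q u (A' w) := by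
  by_cases hx : Q x = 0
  · exact ⟨0, 0, by simp [hx], by simp [hx], by simp⟩
  obtain ⟨S, hS⟩ := h x hx
  have hS_symm (w : V) : Q (S.symm w) = (Q x)⁻¹ * Q w := by
    rw [eq_inv_mul_iff_mul_eq₀ hx, ← hS, S.apply_symm_apply]
  refine ⟨S, Q x • S.symm.toLinearMap, hS, fun w => ?_, fun u w => ?_⟩
  · simp only [LinearMap.smul_apply, LinearEquiv.coe_coe, QuadraticMap.map_smul, hS_symm,
      smul_eq_mul]
    field_simp
  · obtain ⟨z, rfl⟩ := S.surjective w
    simp only [LinearMap.smul_apply, LinearEquiv.coe_coe, LinearEquiv.symm_apply_apply,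
      QuadraticMap.polar_smul_right, smul_eq_mul]
    simp only [QuadraticMap.polar, ← map_add, hS]
    ring

theorem IsRound.exists_similitude_doubleForm (h : IsRound Q) (a : F) (x : V × V) :
    ∃ M : V × V →ₗ[F] V × V, ∀ w, doubleForm Q a (M w) = doubleForm Q a x * doubleForm Q a w := by
  obtain ⟨A, A', hA, hA', hadj⟩ := h.exists_adjoint_similitudes x.1
  by_cases hx : Q x.2 = 0
  · refine ⟨A.prodMap A, fun w => ?_⟩
    simp only [doubleForm_apply, LinearMap.prodMap_apply, hA, hx]
    ring
  obtain ⟨T, hT⟩ := h x.2 hx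
  -- the matrix `(A, aT; T, t⁻¹ T A' T)`, `t = Q x.2`, is modelled on Cayley-Dickson multiplication
  refine ⟨(A.coprod (a • T.toLinearMap)).prod
    (T.toLinearMap ∘ₗ LinearMap.id.coprod ((Q x.2)⁻¹ • (A' ∘ₗ T.toLinearMap))), fun w => ?_⟩
  simp only [doubleForm_apply, LinearMap.prod_apply, Function.prod, LinearMap.coprod_apply,
    LinearMap.comp_apply, LinearMap.smul_apply, LinearEquiv.coe_coe, LinearMap.id_apply, hT,
    QuadraticMap.map_add Q, hA, hA', QuadraticMap.map_smul, QuadraticMap.polar_smul_right,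
    smul_eq_mul, hadj, map_smul]
  field_simp
  ring

theorem IsRound.isRound_doubleForm [FiniteDimensional F V] (h : IsRound Q) {a : F}
    (hnondeg : (doubleForm Q a).Nondegenerate) : IsRound (doubleForm Q a) := by
  intro x hx
  obtain ⟨M, hM⟩ := h.exists_similitude_doubleForm a x
  exact ⟨.ofInjectiveEndo M (injective_of_similitude hnondeg hx M hM), hM⟩

theorem HasLagrangian.hasLagrangian_doubleForm [FiniteDimensional F V] (h : HasLagrangian Q)
    (a : F) : HasLagrangian (doubleForm Q a) := by
  obtain ⟨W, hW, hdim⟩ := h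
  refine ⟨(W.subtype.prodMap W.subtype).range, ?_, ?_⟩
  · rintro _ ⟨⟨u, v⟩, rfl⟩
    simp [doubleForm_apply, hW]
  · rw [LinearMap.finrank_range_of_inj (W.injective_subtype.prodMap W.injective_subtype),
      Module.finrank_prod, Module.finrank_prod, ← hdim]
    ring

theorem IsRound.hasLagrangian_doubleForm [FiniteDimensional F V] (h : IsRound Q) {a : F}
    (ha : a ≠ 0) (hlag : ¬ Q.Anisotropic → HasLagrangian Q)
    (hiso : ¬ (doubleForm Q a).Anisotropic) : HasLagrangian (doubleForm Q a) := by
  by_cases hQ : Q.Anisotropic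
  swap
  · exact (hlag hQ).hasLagrangian_doubleForm a
  obtain ⟨x, hx0, hx⟩ := (QuadraticMap.not_anisotropic_iff_exists _).1 hiso
  rw [doubleForm_apply, sub_eq_zero] at hx
  have hx₂ : Q x.2 ≠ 0 := fun h₂ =>
    hx0 (Prod.ext (hQ _ (by rw [hx, h₂, mul_zero])) (hQ _ h₂))
  have hx₁ : Q x.1 ≠ 0 := hx ▸ mul_ne_zero ha hx₂
  obtain ⟨S, hS⟩ := h _ hx₁
  obtain ⟨T, hT⟩ := h _ hx₂
  -- `a = Q x.1 / Q x.2` is a similarity factor of `Q`: take the graph of a similitude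
  refine ⟨(S.toLinearMap.prod T.toLinearMap).range, ?_, ?_⟩
  · rintro _ ⟨u, rfl⟩
    rw [doubleForm_apply, LinearMap.prod_apply]
    simp only [Function.prod, LinearEquiv.coe_coe, hS, hT]
    linear_combination Q u * hx
  · rw [LinearMap.finrank_range_of_inj fun u v huv => S.injective (congrArg Prod.fst huv),
      Module.finrank_prod, two_mul]

theorem HasLagrangian.not_anisotropic_comp [FiniteDimensional F V] (h : HasLagrangian Q)
    {J : V' →ₗ[F] V} (hJ : Function.Injective J)
    (hdim : Module.finrank F V < 2 * Module.finrank F V') : ¬ (Q.comp J).Anisotropic := by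
  obtain ⟨W, hW, hWdim⟩ := h
  have hsum := Submodule.finrank_sup_add_finrank_inf_eq W J.range
  have hle := (W ⊔ J.range).finrank_le
  rw [LinearMap.finrank_range_of_inj hJ] at hsum
  have hmeet : W ⊓ J.range ≠ ⊥ := fun hbot => by
    rw [hbot, finrank_bot] at hsum
    omega
  obtain ⟨_, ⟨hvW, v, rfl⟩, hv0⟩ := Submodule.exists_mem_ne_zero_of_ne_bot hmeet
  exact fun haniso => hv0 (by rw [haniso v (hW _ hvW), map_zero])

end Round

section Pfister

/-- Splitting a function on `{0,1}ⁿ⁺¹` according to the first coordinate. -/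
def splitFirst (F : Type*) [Field F] (n : ℕ) :
    ((Fin (n + 1) → Bool) → F) ≃ₗ[F] ((Fin n → Bool) → F) × ((Fin n → Bool) → F) where
  toFun f := (fun ε => f (Fin.cons false ε), fun ε => f (Fin.cons true ε))
  invFun p ε := if ε 0 then p.2 (Fin.tail ε) else p.1 (Fin.tail ε)
  map_add' _ _ := rfl
  map_smul' _ _ := rfl
  left_inv f := by
    ext ε
    induction ε using Fin.consCases with
    | cons b ε => cases b <;> simp
  right_inv p := by simp

variable {F : Type*} [Field F] {n : ℕ}

theorem pfisterForm_eq_doubleForm_comp (a : Fin (n + 1) → F) :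
    pfisterForm a =
      (doubleForm (pfisterForm (Fin.tail a)) (a 0)).comp (splitFirst F n).toLinearMap := by
  ext x
  rw [QuadraticMap.comp_apply, doubleForm_apply]
  simp only [pfisterForm, QuadraticMap.weightedSumSquares_apply]
  rw [← (Fin.consEquiv fun _ => Bool).sum_comp, Fintype.sum_prod_type, Fintype.sum_bool]
  simp only [splitFirst, Fin.consEquiv, Equiv.coe_fn_mk, Fin.prod_univ_succ, Fin.cons_zero,
    Fin.cons_succ, Fin.tail, LinearMap.coe_mk, AddHom.coe_mk, ↓reduceIte, Bool.false_eq_true,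
    smul_eq_mul, one_mul, neg_mul, mul_assoc, Finset.mul_sum, Finset.sum_neg_distrib]
  ring

theorem pfisterForm_zero_apply (a : Fin 0 → F) (x : (Fin 0 → Bool) → F) :
    pfisterForm a x = x default * x default := by
  rw [pfisterForm, QuadraticMap.weightedSumSquares_apply, Fintype.sum_subsingleton _ default,
    Finset.univ_eq_empty, Finset.prod_empty, one_smul]

theorem extendScalars_pfisterForm [Invertible (2 : F)] (A : Type*) [Field A] [Algebra F A]
    (a : Fin n → F) : extendScalars A (pfisterForm a) = pfisterForm (algebraMap F A ∘ a) := by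
  rw [pfisterForm, extendScalars_weightedSumSquares, pfisterForm]
  congr 1
  ext ε
  rw [Function.comp_apply, map_prod]
  exact Finset.prod_congr rfl fun i _ => by split_ifs <;> simp

variable [Invertible (2 : F)] {a : Fin n → F}

theorem nondegenerate_pfisterForm (ha : ∀ i, a i ≠ 0) : (pfisterForm a).Nondegenerate := by
  rw [nondegenerate_iff_det_toMatrix'_ne_zero, pfisterForm, toMatrix'_weightedSumSquares,
    Matrix.det_diagonal]
  refine Finset.prod_ne_zero_iff.2 fun ε _ => Finset.prod_ne_zero_iff.2 fun i _ => ?_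
  split_ifs
  · exact neg_ne_zero.2 (ha i)
  · exact one_ne_zero

theorem nondegenerate_doubleForm_pfisterForm {a : Fin (n + 1) → F} (ha : ∀ i, a i ≠ 0) :
    (doubleForm (pfisterForm (Fin.tail a)) (a 0)).Nondegenerate := by
  have := nondegenerate_comp_linearEquiv (nondegenerate_pfisterForm ha) (splitFirst F n).symm
  rw [pfisterForm_eq_doubleForm_comp] at this
  convert this
  ext x
  simp

theorem isRound_pfisterForm (ha : ∀ i, a i ≠ 0) : IsRound (pfisterForm a) := by
  induction n with
  | zero =>
    intro x hx
    rw [pfisterForm_zero_apply] at hx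
    refine ⟨.smulOfNeZero F _ (x default) (left_ne_zero_of_mul hx), fun w => ?_⟩
    rw [LinearEquiv.smulOfNeZero_apply, QuadraticMap.map_smul, pfisterForm_zero_apply a x,
      smul_eq_mul]
  | succ n ih =>
    rw [pfisterForm_eq_doubleForm_comp]
    have htail : IsRound (pfisterForm (Fin.tail a)) := ih fun i => ha _
    exact (htail.isRound_doubleForm (nondegenerate_doubleForm_pfisterForm ha)).comp_linearEquiv _

theorem hasLagrangian_pfisterForm (ha : ∀ i, a i ≠ 0) (hiso : ¬ (pfisterForm a).Anisotropic) :
    HasLagrangian (pfisterForm a) := by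
  induction n with
  | zero =>
    refine absurd (fun x hx => ?_) hiso
    rw [pfisterForm_zero_apply, mul_self_eq_zero] at hx
    exact funext fun ε => by rw [Subsingleton.elim ε default, hx, Pi.zero_apply]
  | succ n ih =>
    rw [pfisterForm_eq_doubleForm_comp] at hiso ⊢
    have htail : ∀ i, Fin.tail a i ≠ 0 := fun i => ha _
    have hdouble : ¬ (doubleForm (pfisterForm (Fin.tail a)) (a 0)).Anisotropic := fun h =>
      hiso fun x hx => (splitFirst F n).map_eq_zero_iff.1 (h _ hx)
    exact ((isRound_pfisterForm htail).hasLagrangian_doubleForm (ha 0) (ih htail)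
      hdouble).comp_linearEquiv _

end Pfister

/-! ### Pfister neighbours -/

section Neighbour

variable {K ι κ : Type*} [Field K] [Fintype ι] [DecidableEq ι] [Fintype κ] [DecidableEq κ]

theorem StablyBirationalForms.of_quadricConeRing_equiv {q : QuadraticForm K (ι → K)}
    {q' : QuadraticForm K (κ → K)} (e : quadricConeRing q ≃ₐ[K] quadricConeRing q') :
    StablyBirationalForms q q' :=
  ⟨0, 0, ⟨IsFractionRing.algEquivOfAlgEquiv (MvPolynomial.mapAlgEquiv (Fin 0) e)⟩⟩

theorem StablyBirationalForms.trans_quadricConeRing_equiv {μ : Type*} [Fintype μ] [DecidableEq μ]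
    {q : QuadraticForm K (ι → K)} {q' : QuadraticForm K (κ → K)} {q'' : QuadraticForm K (μ → K)}
    (h : StablyBirationalForms q q') (e : quadricConeRing q' ≃ₐ[K] quadricConeRing q'') :
    StablyBirationalForms q q'' := by
  obtain ⟨a, b, ⟨f⟩⟩ := h
  exact ⟨a, b, ⟨f.trans (IsFractionRing.algEquivOfAlgEquiv (MvPolynomial.mapAlgEquiv (Fin b) e))⟩⟩

variable [Invertible (2 : K)] {q : QuadraticForm K (ι → K)} {q' : QuadraticForm K (κ → K)} {c : K}
  {J : (κ → K) →ₗ[K] ι → K}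

theorem stablyBirationalForms_of_similar_of_card_eq (hc : c ≠ 0) (hJ : Function.Injective J)
    (h : q.comp J = c • q') (hcard : Fintype.card κ = Fintype.card ι) :
    StablyBirationalForms q' q := by
  have hrank : Module.finrank K (κ → K) = Module.finrank K (ι → K) := by simpa using hcard
  obtain ⟨e⟩ := quadricConeRing_equiv_of_similar (.ofInjectiveOfFinrankEq J hJ hrank) hc h
  exact .of_quadricConeRing_equiv e.symm

theorem not_anisotropic_extendScalars_of_subform (F : Type*) [Field F] [Algebra K F]
    (hJ : Function.Injective J) (h : q.comp J = c • q')
    (hiso : ¬ (extendScalars F q').Anisotropic) :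
    ¬ (extendScalars F q).Anisotropic := by
  obtain ⟨J', hJ', hJq⟩ := exists_injective_extendScalars (F := F) J hJ h
  refine fun haniso => hiso fun x hx => (map_eq_zero_iff J' hJ').1 (haniso _ ?_)
  rw [hJq, hx, mul_zero]

variable {n : ℕ} {a : Fin n → K}

theorem not_anisotropic_extendScalars_neighbour (F : Type*) [Field F] [Algebra K F]
    (ha : ∀ i, a i ≠ 0) {J : (κ → K) →ₗ[K] (Fin n → Bool) → K} (hJ : Function.Injective J)
    (h : (pfisterForm a).comp J = c • q') (hc : c ≠ 0) (hdim : 2 ^ n < 2 * Fintype.card κ)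
    (hiso : ¬ (extendScalars F (pfisterForm a)).Anisotropic) :
    ¬ (extendScalars F q').Anisotropic := by
  let _ : Invertible (2 : F) := invertibleTwoOfAlgebra K F
  obtain ⟨J', hJ', hJq⟩ := exists_injective_extendScalars (F := F) J hJ h
  rw [extendScalars_pfisterForm] at hiso hJq
  have hlag : HasLagrangian (pfisterForm (algebraMap K F ∘ a)) :=
    hasLagrangian_pfisterForm (fun i => (map_ne_zero _).2 (ha i)) hiso
  refine fun haniso => hlag.not_anisotropic_comp hJ' (by simpa using hdim) fun x hx => haniso x ?_
  rw [QuadraticMap.comp_apply, hJq] at hx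
  exact (mul_eq_zero.1 hx).resolve_left ((map_ne_zero _).2 hc)

theorem stablyBirationalForms_pfisterForm_of_subform (hq' : q'.Nondegenerate) (ha : ∀ i, a i ≠ 0)
    {J : (κ → K) →ₗ[K] (Fin n → Bool) → K} (hJ : Function.Injective J)
    (h : (pfisterForm a).comp J = c • q') (hc : c ≠ 0) (hdim : 2 ^ n < 2 * Fintype.card κ) :
    StablyBirationalForms q' (pfisterForm a) := by
  have hcard : Fintype.card (Fin n → Bool) = 2 ^ n := by simp
  rcases lt_or_ge n 2 with hn | hn
  · have hle : Fintype.card κ ≤ 2 ^ n := by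
      simpa using LinearMap.finrank_le_finrank_of_injective hJ
    refine stablyBirationalForms_of_similar_of_card_eq hc hJ h ?_
    interval_cases n <;> omega
  have hpow : 2 ^ 2 ≤ 2 ^ n := Nat.pow_le_pow_right two_pos hn
  have hκ : 3 ≤ Fintype.card κ := by omega
  have hι : 3 ≤ Fintype.card (Fin n → Bool) := by omega
  have hnondeg := nondegenerate_pfisterForm ha
  have : Nonempty κ := Fintype.card_pos_iff.1 (by omega)
  have := isDomain_quadricConeRing hq' hκ
  have := isDomain_quadricConeRing hnondeg hι
  exact stablyBirationalForms_of_mutually_isotropic hq' hnondeg hκ hι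
    (not_anisotropic_extendScalars_of_subform _ hJ h not_anisotropic_extendScalars_fractionRing)
    (not_anisotropic_extendScalars_neighbour _ ha hJ h hc hdim
      not_anisotropic_extendScalars_fractionRing)

end Neighbour

/-- **Lemma 3.3 (Schreieder; cf. Hoffmann).**  Let `K` be a field of characteristic `≠ 2`,
let `q₂` be an `n`-fold Pfister form over `K` and let `q₁` be a Pfister neighbour of `q₂`
(i.e. `q₁` is non-degenerate, similar to a subform of `q₂`, and `2 dim q₁ > dim q₂ = 2ⁿ`).
Then `q₁` is stably birational to `q₂`. -/
theorem pfister_neighbour_stably_birational_to_pfister_form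
    (K : Type*) [Field K] (h2 : (2 : K) ≠ 0)
    (n : ℕ) (a : Fin n → K) (ha : ∀ i, a i ≠ 0)
    (q₂ : QuadraticForm K ((Fin n → Bool) → K))
    (hq₂ : QuadraticMap.Equivalent q₂ (pfisterForm a))
    (m₁ : ℕ) (q₁ : QuadraticForm K (Fin m₁ → K))
    (hq₁nondeg : (QuadraticMap.polarBilin q₁).Nondegenerate)
    (c : K) (hc : c ≠ 0)
    (j : (Fin m₁ → K) →ₗ[K] ((Fin n → Bool) → K))
    (hj : Function.Injective j)
    (hsub : ∀ v, q₂ (j v) = c * q₁ v)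
    (hdim : 2 ^ n < 2 * m₁) :
    StablyBirationalForms q₁ q₂ := by
  let _ : Invertible (2 : K) := invertibleOfNonzero h2
  obtain ⟨φ⟩ := hq₂
  have hsub' : (pfisterForm a).comp (φ.toLinearEquiv.toLinearMap ∘ₗ j) = c • q₁ :=
    QuadraticMap.ext fun v => (φ.map_app (j v)).trans (hsub v)
  have hisometry : (pfisterForm a).comp φ.toLinearEquiv.toLinearMap = (1 : K) • q₂ := by
    rw [one_smul]
    exact QuadraticMap.ext φ.map_app
  obtain ⟨e⟩ := quadricConeRing_equiv_of_similar φ.toLinearEquiv one_ne_zero hisometry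
  have hpfister : StablyBirationalForms q₁ (pfisterForm a) :=
    stablyBirationalForms_pfisterForm_of_subform
      (QuadraticMap.nondegenerate_polar_iff.1 hq₁nondeg) ha
      (φ.toLinearEquiv.injective.comp hj) hsub' hc (by rwa [Fintype.card_fin])
  exact hpfister.trans_quadricConeRing_equiv e
end
end

section
/- Let n and r be positive integers with r ≥ n, and let (d_i)_{0≤i≤r+1} be a tuple of non-negative integers all of the same parity. Then there exists a smooth r-fold quadric bundle of type (d_i)_{0≤i≤r+1} over ℙ^n that is rational. -/
/-!
Fix a surjection `κ` from the indices `0, …, r` to the indices `0, …, n`. The bundle is given by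
`q = 2 z₀ L + Q` with `L = ∑ⱼ x_{κ(j)} ^ eⱼ zⱼ₊₁` and `Q = ∑ⱼₖ cⱼₖ xₖ ^ mⱼ zⱼ₊₁²`, where the complex
numbers `cⱼₖ` are algebraically independent over `ℚ`.

*Rationality.* The equation `q = 0` has degree one in `z₀`, so it is solved by `z₀ = -Q / (2 L)` and
the other coordinates are free. It is irreducible because `L` is irreducible and does not divide
`Q`.

*Smoothness.* Genericity of the `cⱼₖ` plays the role of Bertini's theorem. There is a derivation `D`
of `ℂ` with `D cⱼₖ = 1` which kills all the other coefficients. At a singular point of `X`,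
applying `D` to `q = 0` leaves `xₖ ^ mⱼ zⱼ₊₁² = 0`. Choosing `k` with `xₖ ≠ 0` gives `zⱼ₊₁ = 0`
for all `j`. So the point lies on the section `z₁ = … = zᵣ₊₁ = 0` of the bundle, along which
`∂q/∂zⱼ₊₁ = 2 z₀ x_{κ(j)} ^ eⱼ`, and this is nonzero for some `j`. The same argument, applied to
a kernel vector of the matrix at `x = (1, …, 1)`, shows that `q` is generically non-degenerate.
-/

noncomputable section
open MvPolynomial

/-- The rational function field `ℂ(t₁, …, t_d)`. -/
abbrev RatFF (d : ℕ) : Type := FractionRing (MvPolynomial (Fin d) ℂ)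

/-- An affine ℂ-algebra `R` (a chart, or an affine cone, of a variety `V`) has stably
rational fraction field: `Frac(R)(y₁,…,y_m) ≅ ℂ(t₁,…,t_d)` for some `m`, `d`.
If `R` is the coordinate ring of the affine cone over a projective variety `V`
(so that `Frac R = ℂ(V)(t)` is stably birational to `ℂ(V)`), this holds if and only if
`V` is stably rational, i.e. `V × ℙᵐ` is birational to a projective space for some `m`. -/
def IsStablyRationalSpec (R : Type*) [CommRing R] [Algebra ℂ R] : Prop :=
  ∃ m d : ℕ, Nonempty (FractionRing (MvPolynomial (Fin m) R) ≃ₐ[ℂ] RatFF d)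

/-- The fraction field of the affine ℂ-algebra `R` embeds into a purely transcendental
extension of `ℂ`.  If `R` is the coordinate ring of the affine cone over a projective
variety `V`, this holds if and only if `V` is unirational. -/
def IsUnirationalSpec (R : Type*) [CommRing R] [Algebra ℂ R] : Prop :=
  ∃ d : ℕ, Nonempty (FractionRing R →ₐ[ℂ] RatFF d)

/-- `Z` is an algebraic (Zariski closed) subset of a parameter space `V` with coordinates
`coords`: it is the common zero locus of a set of polynomial functions in the coordinates. -/
def IsAlgSubsetOn {V : Type*} (coords : Set (V → ℂ)) (Z : Set V) : Prop :=
  ∃ S : Set (V → ℂ),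
    S ⊆ ↑(Algebra.adjoin ℂ coords) ∧ Z = {v | ∀ f ∈ S, f v = 0}

/-- `P` holds for a very general point of the parameter space `V`: it holds away from a
countable union of proper algebraic subsets. -/
def VeryGenerallyOn {V : Type*} (coords : Set (V → ℂ)) (P : V → Prop) : Prop :=
  ∃ Z : ℕ → Set V,
    (∀ m, IsAlgSubsetOn coords (Z m) ∧ Z m ≠ Set.univ) ∧ ∀ v, (∀ m, v ∉ Z m) → P v

namespace QB

/-- Homogeneous coordinate ring `ℂ[x₀, …, xₙ]` of `ℙⁿ`. -/
abbrev PolyP (n : ℕ) := MvPolynomial (Fin (n+1)) ℂ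

/-- Coordinate ring `ℂ[x₀,…,xₙ,z₀,…,z_{r+1}]` of the affine double cone over
`ℙ(𝓔)` (`x`'s: base variables, `z`'s: fibre variables). -/
abbrev Amb (n r : ℕ) := MvPolynomial (Fin (n+1) ⊕ Fin (r+2)) ℂ

/-- Homogeneous component of (possibly negative) degree `m`; it is `0` for `m < 0`. -/
def homComp (n : ℕ) (m : ℤ) : Submodule ℂ (PolyP n) :=
  if 0 ≤ m then homogeneousSubmodule (Fin (n+1)) ℂ m.toNat else ⊥

/-- The parameter space of symmetric matrices `A = (a_{ij})`, `0 ≤ i,j ≤ r+1`, of homogeneous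
polynomials with `deg a_{ij} = l_i + l_j + l₀`, i.e. of line bundle valued quadratic forms
`q : 𝓔 → O_{ℙⁿ}(l₀)` on `𝓔 = ⊕_{i=0}^{r+1} O_{ℙⁿ}(-l_i)`.  The corresponding
quadric bundle `X = {q = 0} ⊂ ℙ(𝓔)`, given locally over `ℙⁿ` by
`∑ a_{ij} z_i z_j = 0`, is an `r`-fold quadric bundle over `ℙⁿ` of type `(d_i)` with
`d_i = 2 l_i + l₀`. -/
def SymMat (n r : ℕ) (l : Fin (r+2) → ℤ) (l₀ : ℤ) : Type :=
  {a : Fin (r+2) → Fin (r+2) → PolyP n //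
    (∀ i j, a i j = a j i) ∧ ∀ i j, a i j ∈ homComp n (l i + l j + l₀)}

variable {n r : ℕ} {l : Fin (r+2) → ℤ} {l₀ : ℤ}

/-- The quadratic form `q = ∑_{i,j} a_{ij} z_i z_j` as a polynomial on the double affine cone. -/
def qpoly (A : SymMat n r l l₀) : Amb n r :=
  ∑ i, ∑ j, (rename Sum.inl (A.1 i j)) * X (Sum.inr i) * X (Sum.inr j)

/-- `A` defines a quadric bundle over `ℙⁿ`, i.e. `X = {q = 0} → ℙⁿ` is flat (the quadratic
form is nonzero on each fibre) with generic fibre a smooth quadric (the symmetric matrix is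
generically non-degenerate). -/
def IsQuadricBundle (A : SymMat n r l l₀) : Prop :=
  (Matrix.det (Matrix.of fun i j => A.1 i j) ≠ 0) ∧
    ∀ x : Fin (n+1) → ℂ, x ≠ 0 → ∃ i j, eval x (A.1 i j) ≠ 0

/-- Substitution `x_i = 1`, `z_j = 1`, giving the equation of `X` on the standard affine
chart `{x_i ≠ 0, z_j ≠ 0}` of `ℙ(𝓔)`. -/
def chartSub (i : Fin (n+1)) (j : Fin (r+2)) (p : Amb n r) : Amb n r :=
  aeval (fun v => if v = Sum.inl i ∨ v = Sum.inr j then 1 else X v) p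

/-- The total space `X = {q = 0} ⊂ ℙ(𝓔)` is smooth over `ℂ`: on each standard affine chart
the dehomogenized equation satisfies the Jacobian criterion. -/
def SmoothTotalSpace (A : SymMat n r l l₀) : Prop :=
  ∀ (i : Fin (n+1)) (j : Fin (r+2)) (p : Fin (n+1) ⊕ Fin (r+2) → ℂ),
    eval p (chartSub i j (qpoly A)) = 0 →
      ∃ v, eval p (pderiv v (chartSub i j (qpoly A))) ≠ 0

/-- Coordinate ring of the affine double cone over `X = {q = 0} ⊂ ℙ(𝓔)`; the corresponding
affine variety is stably birational to `X` (its fraction field is `ℂ(X)(t, s)`). -/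
def ConeRing (A : SymMat n r l l₀) : Type :=
  Amb n r ⧸ Ideal.span {qpoly A}

instance (A : SymMat n r l l₀) : CommRing (ConeRing A) := Ideal.Quotient.commRing _
instance (A : SymMat n r l l₀) : Algebra ℂ (ConeRing A) := Ideal.Quotient.algebra ℂ

/-- Coordinate ring of the affine chart `X ∩ {x_i = 1, z_j = 1}` of `X ⊂ ℙ(𝓔)`;
when nonempty, this chart is a dense open subvariety of `X`, so if it is integral its
fraction field is the function field `ℂ(X)`. -/
def ChartRing (A : SymMat n r l l₀) (i : Fin (n+1)) (j : Fin (r+2)) : Type :=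
  Amb n r ⧸ Ideal.span {qpoly A, X (Sum.inl i) - 1, X (Sum.inr j) - 1}

instance (A : SymMat n r l l₀) (i : Fin (n+1)) (j : Fin (r+2)) : CommRing (ChartRing A i j) :=
  Ideal.Quotient.commRing _
instance (A : SymMat n r l l₀) (i : Fin (n+1)) (j : Fin (r+2)) : Algebra ℂ (ChartRing A i j) :=
  Ideal.Quotient.algebra ℂ

/-- The quadric bundle `X` given by `A` is rational over `ℂ`: `X` is integral and its
function field (computed on a dense standard affine chart) is purely transcendental,
`ℂ(X) ≅ ℂ(t₁, …, t_{n+r})`, i.e. `X` is birational to `ℙ^{n+r}`. -/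
def IsRationalQB (A : SymMat n r l l₀) : Prop :=
  IsDomain (ConeRing A) ∧
    ∃ i j, Nonempty (FractionRing (ChartRing A i j) ≃ₐ[ℂ] RatFF (n+r))

/-- The quadric bundle `X` given by `A` is stably rational: `X × ℙᵐ` is birational to a
projective space for some `m`; equivalently its affine double cone is. -/
def IsStablyRationalQB (A : SymMat n r l l₀) : Prop :=
  IsStablyRationalSpec (ConeRing A)

/-- The quadric bundle `X` given by `A` is unirational: `ℂ(X)` embeds into a purely
transcendental extension of `ℂ`; equivalently this holds for its affine double cone. -/
def IsUnirationalQB (A : SymMat n r l l₀) : Prop :=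
  IsUnirationalSpec (ConeRing A)

/-- The coordinates (coefficients of the matrix entries) on the parameter space `SymMat`. -/
def symMatCoords (n r : ℕ) (l : Fin (r+2) → ℤ) (l₀ : ℤ) :
    Set (SymMat n r l l₀ → ℂ) :=
  {f | ∃ (i j : Fin (r+2)) (m : Fin (n+1) →₀ ℕ), f = fun A => coeff m (A.1 i j)}

/-- The euclidean (analytic) topology on the parameter space, induced from the coefficients. -/
def coeffTopology (n r : ℕ) (l : Fin (r+2) → ℤ) (l₀ : ℤ) :
    TopologicalSpace (SymMat n r l l₀) :=
  TopologicalSpace.induced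
    (fun A (p : Fin (r+2) × Fin (r+2) × ((Fin (n+1)) →₀ ℕ)) => coeff p.2.2 (A.1 p.1 p.2.1))
    inferInstance

/-- Dehomogenization `ℂ[x₀,…,xₙ] → ℂ(t₁,…,tₙ) = ℂ(ℙⁿ)`, `x₀ ↦ 1`, `x_i ↦ t_i`. -/
def dehom (n : ℕ) : PolyP n →ₐ[ℂ] RatFF n :=
  aeval fun i : Fin (n+1) =>
    if h : i = 0 then 1 else algebraMap (MvPolynomial (Fin n) ℂ) (RatFF n) (X (i.pred h))

/-- The quadric bundle given by `A` admits a rational section, i.e. its generic fibre,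
the quadric `{∑ a_{ij}(x) z_i z_j = 0} ⊂ ℙ^{r+1}_{ℂ(ℙⁿ)}`, has a rational point. -/
def HasRationalSection (A : SymMat n r l l₀) : Prop :=
  ∃ w : Fin (r+2) → RatFF n, w ≠ 0 ∧ ∑ i, ∑ j, dehom n (A.1 i j) * w i * w j = 0

end QB

section Derivations

lemma exists_derivation_extending {R A B M : Type*} [CommRing R] [CommRing A] [CommRing B]
    [AddCommGroup M] [Algebra R A] [Algebra R B] [Algebra A B] [IsScalarTower R A B] [Module R M]
    [Module A M] [Module B M] [IsScalarTower R A M] [IsScalarTower R B M] [IsScalarTower A B M]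
    [Algebra.FormallyEtale A B] (d : Derivation R A M) :
    ∃ D : Derivation R B M, ∀ a, D (algebraMap A B a) = d a := by
  have hbase := KaehlerDifferential.isBaseChange_of_formallyEtale R A B
  refine ⟨(hbase.lift d.liftKaehlerDifferential).compDer (KaehlerDifferential.D R B), fun a => ?_⟩
  change hbase.lift _ (KaehlerDifferential.D R B (algebraMap A B a)) = d a
  rw [← KaehlerDifferential.map_D R R, hbase.lift_eq, Derivation.liftKaehlerDifferential_comp_D]

variable {K L ι : Type*} [Field K] [Field L] [CharZero K] [Algebra K L]

open scoped IntermediateField.algebraAdjoinAdjoin in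
lemma formallyEtale_adjoin_of_isTranscendenceBasis {v : ι → L} (hv : IsTranscendenceBasis K v) :
    Algebra.FormallyEtale (Algebra.adjoin K (Set.range v)) L := by
  let F := IntermediateField.adjoin K (Set.range v)
  have : Algebra.FormallyEtale (Algebra.adjoin K (Set.range v)) F :=
    .of_isLocalization (nonZeroDivisors _)
  have : Algebra.IsAlgebraic F L := hv.isAlgebraic_field
  have : Algebra.FormallyEtale F L := .of_isSeparable F L
  exact .comp _ F L

lemma exists_derivation_of_isTranscendenceBasis {v : ι → L} (hv : IsTranscendenceBasis K v)
    (w : ι → L) : ∃ D : Derivation K L L, ∀ i, D (v i) = w i := by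
  let _ : Algebra (MvPolynomial ι K) L := (aeval v).toAlgebra
  let _ : Algebra (MvPolynomial ι K) (Algebra.adjoin K (Set.range v)) :=
    hv.1.aevalEquiv.toAlgHom.toAlgebra
  have : IsScalarTower K (MvPolynomial ι K) L := .of_algebraMap_eq fun a => (aeval_C v a).symm
  have : IsScalarTower (MvPolynomial ι K) (Algebra.adjoin K (Set.range v)) L :=
    .of_algebraMap_eq fun p => (hv.1.algebraMap_aevalEquiv p).symm
  have : Algebra.FormallyEtale (MvPolynomial ι K) (Algebra.adjoin K (Set.range v)) :=
    .of_equiv (AlgEquiv.ofRingEquiv (f := hv.1.aevalEquiv.toRingEquiv) fun _ => rfl)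
  have := formallyEtale_adjoin_of_isTranscendenceBasis hv
  have : Algebra.FormallyEtale (MvPolynomial ι K) L :=
    .comp _ (Algebra.adjoin K (Set.range v)) L
  obtain ⟨D, hD⟩ := exists_derivation_extending (B := L) (mkDerivation K w)
  refine ⟨D, fun i => ?_⟩
  rw [← mkDerivation_X K w i, ← hD]
  exact congrArg D (aeval_X v i).symm

lemma exists_derivation_of_algebraicIndependent {c : ι → L} (hc : AlgebraicIndependent K c)
    (w : ι → L) : ∃ D : Derivation K L L, ∀ i, D (c i) = w i := by
  obtain ⟨s, hcs, hs⟩ := exists_isTranscendenceBasis_superset hc.coe_range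
  obtain ⟨D, hD⟩ := exists_derivation_of_isTranscendenceBasis hs fun a => Function.extend c w 0 a
  refine ⟨D, fun i => ?_⟩
  rw [hD ⟨c i, hcs ⟨i, rfl⟩⟩, hc.injective.extend_apply]

lemma exists_algebraicIndependent_rat_complex {ι : Type} (hι : Cardinal.mk ι ≤ Cardinal.continuum) :
    ∃ c : ι → ℂ, AlgebraicIndependent ℚ c := by
  obtain ⟨s, hs⟩ := exists_isTranscendenceBasis ℚ ℂ
  have hcard : Cardinal.mk ℂ = Cardinal.mk s :=
    IsAlgClosed.cardinal_eq_cardinal_transcendence_basis_of_aleph0_lt' _ hs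
      Cardinal.mkRat.le (Cardinal.mk_complex ▸ Cardinal.aleph0_lt_continuum)
  rw [← Cardinal.mk_complex, hcard] at hι
  obtain ⟨f⟩ := hι
  exact ⟨_, hs.1.comp f f.injective⟩

lemma derivation_aeval {σ R A M : Type*} [CommSemiring R] [CommSemiring A] [AddCommMonoid M]
    [Algebra R A] [Module R M] [Module A M] [Fintype σ] (D : Derivation R A M) (p : σ → A)
    (F : MvPolynomial σ R) :
    D (aeval p F) = ∑ v, aeval p (pderiv v F) • D (p v) := by
  classical
  induction F using MvPolynomial.induction_on with
  | C a => simp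
  | add F G hF hG => simp only [map_add, hF, hG, add_smul, Finset.sum_add_distrib]
  | mul_X F w hF =>
    simp only [map_mul, aeval_X, Derivation.leibniz, pderiv_X, smul_eq_mul, hF, map_add, add_smul,
      Finset.sum_add_distrib, Finset.smul_sum, mul_smul]
    congr 1
    simp [Pi.single_apply, apply_ite (aeval p)]

end Derivations

section GenericMember

variable {K L σ ι : Type*} [Field K] [Field L] [Algebra K L] [Fintype ι]

/-- The member with parameter `c`, over the extension `L` of `K`, of the affine-linear family of
polynomials spanned by `F` and the `M i` over `K`. -/
def linearFamily (F : MvPolynomial σ K) (M : ι → MvPolynomial σ K) (c : ι → L) :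
    MvPolynomial σ L :=
  map (algebraMap K L) F + ∑ i, C (c i) * map (algebraMap K L) (M i)

lemma derivation_eval_linearFamily [Fintype σ] (D : Derivation K L L) (F : MvPolynomial σ K)
    (M : ι → MvPolynomial σ K) (c : ι → L) (p : σ → L) :
    D (eval p (linearFamily F M c)) =
      ∑ v, eval p (pderiv v (linearFamily F M c)) * D (p v) + ∑ i, aeval p (M i) * D (c i) := by
  simp only [linearFamily, map_add, map_sum, map_mul, eval_C, pderiv_map, eval_map, ← aeval_def,
    Derivation.leibniz, pderiv_C, smul_eq_mul, derivation_aeval, mul_zero, add_zero,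
    Finset.sum_add_distrib, add_mul, Finset.sum_mul, Finset.mul_sum, mul_assoc]
  rw [Finset.sum_comm, add_assoc]

/-- A substitute for Bertini's theorem. The second alternative in `h1` allows for coordinates that
are held fixed, for instance on an affine chart. -/
lemma aeval_eq_zero_of_generic_linearFamily [CharZero K] [Finite σ]
    {c : ι → L} (hc : AlgebraicIndependent K c)
    {F : MvPolynomial σ K} {M : ι → MvPolynomial σ K} {p : σ → L}
    (h0 : eval p (linearFamily F M c) = 0)
    (h1 : ∀ v, eval p (pderiv v (linearFamily F M c)) = 0 ∨ p v ∈ (algebraMap K L).range) (i : ι) :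
    aeval p (M i) = 0 := by
  classical
  have := Fintype.ofFinite σ
  obtain ⟨D, hD⟩ := exists_derivation_of_algebraicIndependent hc (Pi.single i 1)
  have hdp : ∀ v, eval p (pderiv v (linearFamily F M c)) * D (p v) = 0 := by
    intro v
    rcases h1 v with h | ⟨a, ha⟩
    · rw [h, zero_mul]
    · rw [← ha, D.map_algebraMap, mul_zero]
  simpa [h0, hdp, hD, Pi.single_apply] using (derivation_eval_linearFamily D F M c p).symm

end GenericMember

section SetToOne

variable {σ R : Type*} [CommSemiring R]

lemma mem_supported_compl_singleton {w : σ} {F : MvPolynomial σ R} :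
    F ∈ supported R {w}ᶜ ↔ w ∉ F.vars := by
  rw [mem_supported, Set.subset_compl_singleton_iff, Finset.mem_coe]

lemma degreeOf_eq_zero_iff_mem_supported {w : σ} {F : MvPolynomial σ R} :
    degreeOf w F = 0 ↔ F ∈ supported R {w}ᶜ := by
  rw [mem_supported_compl_singleton, mem_vars_iff_degreeOf_ne_zero, not_not]

open scoped Classical in
/-- Dehomogenization with respect to the variables in `S`: these are set to `1`, and the remaining
ones stay variables of the same polynomial ring. -/
def setToOne (S : Set σ) : MvPolynomial σ R →ₐ[R] MvPolynomial σ R :=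
  aeval (S.piecewise 1 X)

lemma setToOne_X_of_mem {S : Set σ} {v : σ} (hv : v ∈ S) :
    setToOne S (X v : MvPolynomial σ R) = 1 := by
  classical
  rw [setToOne, aeval_X, Set.piecewise_eq_of_mem _ _ _ hv, Pi.one_apply]

lemma setToOne_X_of_notMem {S : Set σ} {v : σ} (hv : v ∉ S) :
    setToOne S (X v : MvPolynomial σ R) = X v := by
  classical
  rw [setToOne, aeval_X, Set.piecewise_eq_of_notMem _ _ _ hv]

lemma setToOne_empty : setToOne (R := R) (∅ : Set σ) = AlgHom.id R _ :=
  algHom_ext fun v => setToOne_X_of_notMem (Set.notMem_empty v)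

lemma setToOne_eq_self {S : Set σ} {F : MvPolynomial σ R} (hF : F ∈ supported R Sᶜ) :
    setToOne S F = F := by
  have hle : supported R Sᶜ ≤ AlgHom.equalizer (setToOne S) (AlgHom.id R _) :=
    Algebra.adjoin_le (by rintro _ ⟨v, hv, rfl⟩; exact setToOne_X_of_notMem hv)
  exact hle hF

lemma setToOne_mem_supported {S T : Set σ} {F : MvPolynomial σ R} (hF : F ∈ supported R T) :
    setToOne S F ∈ supported R T := by
  have hle : supported R T ≤ (supported R T).comap (setToOne S) := by
    refine Algebra.adjoin_le ?_
    rintro _ ⟨v, hv, rfl⟩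
    rw [SetLike.mem_coe, Subalgebra.mem_comap]
    by_cases hvS : v ∈ S
    · rw [setToOne_X_of_mem hvS]
      exact one_mem _
    · rw [setToOne_X_of_notMem hvS]
      exact Algebra.subset_adjoin ⟨v, hv, rfl⟩
  exact hle hF

open scoped Classical in
lemma eval_setToOne (S : Set σ) (p : σ → R) (F : MvPolynomial σ R) :
    eval p (setToOne S F) = eval (S.piecewise 1 p) F := by
  rw [← coe_aeval_eq_eval, ← coe_aeval_eq_eval, RingHom.coe_coe, RingHom.coe_coe,
    ← AlgHom.comp_apply]
  refine DFunLike.congr_fun (algHom_ext fun v => ?_) F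
  by_cases hv : v ∈ S
  · simp [setToOne_X_of_mem, hv]
  · simp [setToOne_X_of_notMem, hv]

lemma eval_setToOne_of_forall_eq_one {S : Set σ} {p : σ → R} (hp : ∀ v ∈ S, p v = 1)
    (F : MvPolynomial σ R) : eval p (setToOne S F) = eval p F := by
  classical
  have hpiecewise : S.piecewise (1 : σ → R) p = p := by
    funext v
    by_cases hv : v ∈ S
    · simp [hv, hp v hv]
    · simp [hv]
  rw [eval_setToOne, hpiecewise]

lemma pderiv_setToOne {S : Set σ} {v : σ} (hv : v ∉ S) (F : MvPolynomial σ R) :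
    pderiv v (setToOne S F) = setToOne S (pderiv v F) := by
  classical
  induction F using MvPolynomial.induction_on with
  | C a => simp [setToOne]
  | add F G hF hG => simp only [map_add, hF, hG]
  | mul_X F w hF =>
    have hw : pderiv v (setToOne S (X w : MvPolynomial σ R)) = setToOne S (pderiv v (X w)) := by
      by_cases hwS : w ∈ S
      · have hne : w ≠ v := fun h => hv (h ▸ hwS)
        simp [setToOne_X_of_mem hwS, pderiv_X_of_ne hne]
      · simp [setToOne_X_of_notMem hwS, pderiv_X, Pi.single_apply, apply_ite (setToOne S)]
    simp only [map_mul, Derivation.leibniz, smul_eq_mul, map_add, hF, hw]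

end SetToOne

section LinearInVariable

variable {σ R : Type*} [CommRing R] [IsDomain R]

lemma eq_zero_of_mul_X_add_dvd {w : σ} {f g G : MvPolynomial σ R} (hf : f ≠ 0)
    (hg : g ∈ supported R {w}ᶜ) (hG : G ∈ supported R {w}ᶜ) (h : f * X w + g ∣ G) : G = 0 := by
  classical
  obtain ⟨H, rfl⟩ := h
  by_contra hne
  have hne_left : f * X w + g ≠ 0 := left_ne_zero_of_mul hne
  rw [← degreeOf_eq_zero_iff_mem_supported,
    degreeOf_mul_eq hne_left (right_ne_zero_of_mul hne)] at hG
  have hmem : f * X w + g ∈ supported R {w}ᶜ :=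
    degreeOf_eq_zero_iff_mem_supported.1 (Nat.eq_zero_of_add_eq_zero_right hG)
  have hfX := (add_mem_cancel_right hg).1 hmem
  rw [← degreeOf_eq_zero_iff_mem_supported, degreeOf_mul_eq hf (X_ne_zero w), degreeOf_X,
    if_pos rfl] at hfX
  omega

lemma irreducible_mul_X_add_of_eval [UniqueFactorizationMonoid R] {w : σ}
    {f g : MvPolynomial σ R} (hf : Irreducible f) (hfw : f ∈ supported R {w}ᶜ)
    (hgw : g ∈ supported R {w}ᶜ) {p : σ → R} (hfp : eval p f = 0) (hgp : eval p g ≠ 0) (k : ℕ) :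
    Irreducible (f ^ k * X w + g) := by
  refine irreducible_mul_X_add _ _ _ (pow_ne_zero _ hf.ne_zero)
    (mem_supported_compl_singleton.1 (pow_mem hfw _)) (mem_supported_compl_singleton.1 hgw)
    (IsRelPrime.pow_left ?_)
  rw [hf.isRelPrime_iff_not_dvd]
  rintro ⟨H, rfl⟩
  simp [hfp] at hgp

end LinearInVariable

section ChartIdeal

variable {σ R : Type*} [CommRing R]

/-- The ideal of the part of the hypersurface `q = 0` on which all the coordinates in `S` are equal
to `1`. -/
def chartIdeal (S : Set σ) (q : MvPolynomial σ R) : Ideal (MvPolynomial σ R) :=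
  Ideal.span (insert q ((fun v => X v - 1) '' S))

lemma mk_setToOne {S : Set σ} {I : Ideal (MvPolynomial σ R)} (hI : ∀ v ∈ S, X v - 1 ∈ I)
    (F : MvPolynomial σ R) : Ideal.Quotient.mk I (setToOne S F) = Ideal.Quotient.mk I F := by
  suffices h : (Ideal.Quotient.mkₐ R I).comp (setToOne S) = Ideal.Quotient.mkₐ R I from
    DFunLike.congr_fun h F
  refine algHom_ext fun v => ?_
  by_cases hv : v ∈ S
  · rw [AlgHom.comp_apply, setToOne_X_of_mem hv, Ideal.Quotient.mkₐ_eq_mk, eq_comm,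
      Ideal.Quotient.eq]
    exact hI v hv
  · rw [AlgHom.comp_apply, setToOne_X_of_notMem hv]

lemma chartIdeal_eq_comap (S : Set σ) (q : MvPolynomial σ R) :
    chartIdeal S q = (Ideal.span {setToOne S q}).comap (setToOne S) := by
  have hmk := mk_setToOne (I := chartIdeal S q) fun v hv =>
    Ideal.subset_span (Set.mem_insert_of_mem _ ⟨v, hv, rfl⟩)
  refine le_antisymm (Ideal.span_le.2 ?_) fun F hF => ?_
  · rintro F (rfl | ⟨v, hv, rfl⟩)
    · exact Ideal.subset_span rfl
    · simp [setToOne_X_of_mem hv]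
  · have hq : Ideal.Quotient.mk (chartIdeal S q) (setToOne S q) = 0 := by
      rw [hmk, Ideal.Quotient.eq_zero_iff_mem]
      exact Ideal.subset_span (Set.mem_insert _ _)
    rw [← Ideal.Quotient.eq_zero_iff_mem, ← hmk, ← zero_dvd_iff, ← hq]
    exact map_dvd _ (Ideal.mem_span_singleton.1 hF)

lemma isPrime_chartIdeal [IsDomain R] [UniqueFactorizationMonoid R] {S : Set σ}
    {q : MvPolynomial σ R} (hq : Irreducible (setToOne S q)) : (chartIdeal S q).IsPrime := by
  have := (Ideal.span_singleton_prime hq.ne_zero).2 hq.prime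
  rw [chartIdeal_eq_comap]
  infer_instance

end ChartIdeal

section Rationality

variable {k σ τ K : Type*} [Field k] [Field K] [Algebra k K] {S : Set σ} {w : σ}
  {f g : MvPolynomial σ k} {φ : MvPolynomial σ k →ₐ[k] K}

lemma setToOne_eq_zero_of_ker_eq_chartIdeal (hφ : RingHom.ker φ = chartIdeal S (f * X w + g))
    (hw : w ∉ S) (hg : g ∈ supported k {w}ᶜ) (hf : setToOne S f ≠ 0) {F : MvPolynomial σ k}
    (hFw : F ∈ supported k {w}ᶜ) (hF : φ F = 0) : setToOne S F = 0 := by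
  rw [← RingHom.mem_ker, hφ, chartIdeal_eq_comap, Ideal.mem_comap, Ideal.mem_span_singleton,
    map_add, map_mul, setToOne_X_of_notMem hw] at hF
  exact eq_zero_of_mul_X_add_dvd hf (setToOne_mem_supported hg) (setToOne_mem_supported hFw) hF

lemma algebraicIndependent_of_ker_eq_chartIdeal
    (hφ : RingHom.ker φ = chartIdeal S (f * X w + g)) (hw : w ∉ S) (hg : g ∈ supported k {w}ᶜ)
    (hf : setToOne S f ≠ 0) :
    AlgebraicIndependent k fun v : ((insert w S)ᶜ : Set σ) => φ (X v) := by
  refine (injective_iff_map_eq_zero _).2 fun G hG => ?_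
  have hsupp : rename (↑) G ∈ supported k ((insert w S)ᶜ : Set σ) := by
    rw [supported_eq_range_rename]
    exact ⟨G, rfl⟩
  have hzero : φ (rename (↑) G) = 0 := by
    rw [← hG, ← AlgHom.comp_apply]
    exact DFunLike.congr_fun (algHom_ext fun v => by simp) G
  have hw_mono : ((insert w S)ᶜ : Set σ) ⊆ {w}ᶜ := Set.compl_subset_compl.2 (by simp)
  have hS_mono : ((insert w S)ᶜ : Set σ) ⊆ Sᶜ := Set.compl_subset_compl.2 (Set.subset_insert w S)
  have h := setToOne_eq_zero_of_ker_eq_chartIdeal hφ hw hg hf (supported_mono hw_mono hsupp) hzero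
  rw [setToOne_eq_self (supported_mono hS_mono hsupp)] at h
  exact rename_injective _ Subtype.val_injective (h.trans (map_zero _).symm)

lemma range_le_adjoin_of_ker_eq_chartIdeal (hφ : RingHom.ker φ = chartIdeal S (f * X w + g))
    (hw : w ∉ S) (hfw : f ∈ supported k {w}ᶜ) (hg : g ∈ supported k {w}ᶜ)
    (hf : setToOne S f ≠ 0) :
    φ.range ≤ (IntermediateField.adjoin k
      (Set.range fun v : ((insert w S)ᶜ : Set σ) => φ (X v))).toSubalgebra := by
  set E := IntermediateField.adjoin k (Set.range fun v : ((insert w S)ᶜ : Set σ) => φ (X v))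
  have hX : ∀ v ≠ w, φ (X v) ∈ E := by
    intro v hv
    by_cases hvS : v ∈ S
    · have h : X v - 1 ∈ RingHom.ker φ := by
        simp [hφ, chartIdeal_eq_comap, setToOne_X_of_mem hvS]
      rw [RingHom.mem_ker, map_sub, map_one, sub_eq_zero] at h
      exact h ▸ one_mem E
    · exact IntermediateField.subset_adjoin _ _ ⟨⟨v, by simp [hv, hvS]⟩, rfl⟩
  have hsupp : supported k {w}ᶜ ≤ E.toSubalgebra.comap φ := by
    refine Algebra.adjoin_le ?_
    rintro _ ⟨v, hv, rfl⟩
    exact hX v hv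
  have hXw : φ (X w) ∈ E := by
    have hf0 : φ f ≠ 0 := fun h => hf (setToOne_eq_zero_of_ker_eq_chartIdeal hφ hw hg hf hfw h)
    have hq : φ (f * X w + g) = 0 := by
      rw [← RingHom.mem_ker, hφ]
      exact Ideal.subset_span (Set.mem_insert _ _)
    rw [map_add, map_mul, mul_comm, ← eq_neg_iff_add_eq_zero, ← eq_div_iff hf0] at hq
    exact hq ▸ div_mem (neg_mem (hsupp hg)) (hsupp hfw)
  rw [← Algebra.map_top, ← adjoin_range_X, Subalgebra.map_le, Algebra.adjoin_le_iff]
  rintro _ ⟨v, rfl⟩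
  exact (eq_or_ne v w).elim (fun h => h ▸ hXw) (hX v)

theorem nonempty_fractionRing_quotient_chartIdeal_algEquiv (hw : w ∉ S)
    (hfw : f ∈ supported k {w}ᶜ) (hg : g ∈ supported k {w}ᶜ)
    (hq : Irreducible (setToOne S (f * X w + g))) (hf : setToOne S f ≠ 0)
    (e : τ ≃ ((insert w S)ᶜ : Set σ)) :
    Nonempty (FractionRing (MvPolynomial σ k ⧸ chartIdeal S (f * X w + g)) ≃ₐ[k]
      FractionRing (MvPolynomial τ k)) := by
  have := isPrime_chartIdeal hq
  set I := chartIdeal S (f * X w + g)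
  let φ := (IsScalarTower.toAlgHom k _ (FractionRing (MvPolynomial σ k ⧸ I))).comp
    (Ideal.Quotient.mkₐ k I)
  have hφ : RingHom.ker φ = I := by
    ext F
    rw [RingHom.mem_ker, ← Ideal.Quotient.eq_zero_iff_mem]
    exact IsFractionRing.to_map_eq_zero_iff (R := MvPolynomial σ k ⧸ I)
  have hind := (algebraicIndependent_of_ker_eq_chartIdeal hφ hw hg hf).comp e e.injective
  have htop : IntermediateField.adjoin k (Set.range fun t : τ => φ (X (e t))) = ⊤ := by
    have hle := range_le_adjoin_of_ker_eq_chartIdeal hφ hw hfw hg hf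
    rw [← e.surjective.range_comp] at hle
    refine top_unique fun x _ => ?_
    obtain ⟨a, b, -, rfl⟩ := IsFractionRing.div_surjective (A := MvPolynomial σ k ⧸ I) x
    obtain ⟨F, rfl⟩ := Ideal.Quotient.mk_surjective a
    obtain ⟨G, rfl⟩ := Ideal.Quotient.mk_surjective b
    exact div_mem (hle ⟨F, rfl⟩) (hle ⟨G, rfl⟩)
  exact ⟨(hind.aevalEquivField.trans ((IntermediateField.equivOfEq htop).trans
    IntermediateField.topEquiv)).symm⟩

end Rationality

namespace QB

open Matrix

variable {n r : ℕ} {l : Fin (r + 2) → ℤ} {l₀ : ℤ}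

section SymMat

/-- The matrix of the quadratic form of `A` on the fibre over the point `x`. -/
def fibreMatrix (A : SymMat n r l l₀) (x : Fin (n + 1) → ℂ) :
    Matrix (Fin (r + 2)) (Fin (r + 2)) ℂ :=
  of fun i j => eval x (A.1 i j)

lemma eval_qpoly (A : SymMat n r l l₀) (p : Fin (n + 1) ⊕ Fin (r + 2) → ℂ) :
    eval p (qpoly A) = (p ∘ Sum.inr) ⬝ᵥ fibreMatrix A (p ∘ Sum.inl) *ᵥ (p ∘ Sum.inr) := by
  simp only [qpoly, map_sum, map_mul, eval_X, eval_rename, dotProduct, mulVec, Finset.mul_sum,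
    fibreMatrix, of_apply, Function.comp_apply]
  exact Finset.sum_congr rfl fun i _ => Finset.sum_congr rfl fun j _ => by ring

lemma rename_inl_mem_supported (i : Fin (r + 2)) (F : PolyP n) :
    (rename Sum.inl F : Amb n r) ∈ supported ℂ {Sum.inr i}ᶜ := by
  classical
  rw [mem_supported_compl_singleton]
  intro h
  simpa using vars_rename Sum.inl F h

lemma eval_pderiv_inr_qpoly (A : SymMat n r l l₀) (p : Fin (n + 1) ⊕ Fin (r + 2) → ℂ)
    (i : Fin (r + 2)) :
    eval p (pderiv (Sum.inr i) (qpoly A)) =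
      2 * (fibreMatrix A (p ∘ Sum.inl) *ᵥ (p ∘ Sum.inr)) i := by
  have hbase (F : PolyP n) : pderiv (Sum.inr i) (rename Sum.inl F : Amb n r) = 0 :=
    pderiv_eq_zero_of_notMem_vars (mem_supported_compl_singleton.1 (rename_inl_mem_supported i F))
  simp only [qpoly, map_sum, Derivation.leibniz, hbase, pderiv_X, Pi.single_apply,
    Sum.inr.injEq, smul_eq_mul, mul_zero, add_zero, map_add, map_mul, eval_X, eval_rename,
    apply_ite (eval p), map_zero, mul_ite, mul_one, Finset.sum_add_distrib, two_mul,
    fibreMatrix, mulVec, dotProduct, of_apply, Function.comp_apply]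
  congr 1
  · exact Finset.sum_congr rfl fun a _ => by simp [A.2.1 a i]
  · rw [Finset.sum_comm]
    simp [mul_comm]

lemma mem_homComp {d : ℤ} {N : ℕ} (hd : d = N) {F : PolyP n} (hF : F.IsHomogeneous N) :
    F ∈ homComp n d := by
  subst hd
  simpa [homComp] using hF

end SymMat

section BorderedMatrix

variable {R : Type*} {m : ℕ}

/-- The symmetric matrix of the quadratic form `2 z₀ (∑ gⱼ zⱼ₊₁) + ∑ fⱼ zⱼ₊₁²`. -/
def borderedDiagonal [Zero R] (g f : Fin m → R) : Fin (m + 1) → Fin (m + 1) → R :=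
  Fin.cons (Fin.cons 0 g) fun i => Fin.cons (g i) (diagonal f i)

lemma borderedDiagonal_symm [Zero R] (g f : Fin m → R) (i j : Fin (m + 1)) :
    borderedDiagonal g f i j = borderedDiagonal g f j i := by
  cases i using Fin.cases <;> cases j using Fin.cases
  · rfl
  · rfl
  · rfl
  · exact congrFun₂ (diagonal_transpose f).symm _ _

lemma map_borderedDiagonal {S F : Type*} [Zero R] [Zero S] [FunLike F R S] [ZeroHomClass F R S]
    (φ : F) (g f : Fin m → R) (i j : Fin (m + 1)) :
    φ (borderedDiagonal g f i j) =
      borderedDiagonal (fun j => φ (g j)) (fun j => φ (f j)) i j := by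
  cases i using Fin.cases <;> cases j using Fin.cases <;>
    simp [borderedDiagonal, diagonal_apply, apply_ite φ]

lemma sum_borderedDiagonal [CommSemiring R] (g f : Fin m → R) (z : Fin (m + 1) → R) :
    ∑ i, ∑ j, borderedDiagonal g f i j * z i * z j =
      2 * (∑ j, g j * z j.succ) * z 0 + ∑ j, f j * z j.succ ^ 2 := by
  have hrow (i : Fin m) : ∑ j, borderedDiagonal g f i.succ j * z i.succ * z j =
      g i * z i.succ * z 0 + f i * z i.succ ^ 2 := by
    simp [borderedDiagonal, Fin.sum_univ_succ, diagonal_apply, sq, mul_assoc]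
  rw [Fin.sum_univ_succ]
  simp only [hrow, Fin.sum_univ_succ, Finset.sum_add_distrib]
  simp only [borderedDiagonal, Fin.cons_zero, Fin.cons_succ, zero_mul, zero_add, two_mul, add_mul,
    Finset.sum_mul, add_assoc, mul_right_comm]

end BorderedMatrix

section Family

variable (κ : Fin (r + 1) → Fin (n + 1)) (e m : Fin (r + 1) → ℕ) (c : Fin (r + 1) × Fin (n + 1) → ℂ)

/-- The linear form `L` in the equation `2 z₀ L + Q = 0` of the bundle. It is needed over `ℂ`, and
over `ℚ` as part of the fixed member of a `linearFamily`. -/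
def linForm (R : Type*) [CommSemiring R] : MvPolynomial (Fin (n + 1) ⊕ Fin (r + 2)) R :=
  ∑ j, X (Sum.inl (κ j)) ^ e j * X (Sum.inr j.succ)

/-- The monomials whose generic linear combination is the quadratic form `Q` in the equation
`2 z₀ L + Q = 0` of the bundle. They are needed over `ℂ`, and over `ℚ` as the directions of a
`linearFamily`. -/
def diagTerm (R : Type*) [CommSemiring R] (a : Fin (r + 1) × Fin (n + 1)) :
    MvPolynomial (Fin (n + 1) ⊕ Fin (r + 2)) R :=
  X (Sum.inl a.2) ^ m a.1 * X (Sum.inr a.1.succ) ^ 2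

/-- The quadratic form `Q` in the equation `2 z₀ L + Q = 0` of the bundle. -/
def diagForm : Amb n r :=
  ∑ a, C (c a) * diagTerm m ℂ a

/-- The symmetric matrix over `ℂ[x₀, …, xₙ]` of the quadratic form `2 z₀ L + Q`. -/
def quadricMatrix : Fin (r + 2) → Fin (r + 2) → PolyP n :=
  borderedDiagonal (fun j => X (κ j) ^ e j) fun j => ∑ k, C (c (j, k)) * X k ^ m j

variable {κ e m c}

lemma quadricMatrix_mem_homComp (hborder : ∀ j : Fin (r + 1), l 0 + l j.succ + l₀ = e j)
    (hdiag : ∀ j : Fin (r + 1), 2 * l j.succ + l₀ = m j) (i j : Fin (r + 2)) :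
    quadricMatrix κ e m c i j ∈ homComp n (l i + l j + l₀) := by
  have hborder_hom (j : Fin (r + 1)) : (X (κ j) ^ e j : PolyP n).IsHomogeneous (e j) := by
    simpa using (isHomogeneous_X ℂ (κ j)).pow (e j)
  have hdiag_hom (j : Fin (r + 1)) :
      (∑ k, C (c (j, k)) * X k ^ m j : PolyP n).IsHomogeneous (m j) :=
    .sum _ _ _ fun k _ => by
      simpa using (isHomogeneous_C _ (c (j, k))).mul ((isHomogeneous_X ℂ k).pow (m j))
  cases i using Fin.cases with
  | zero =>
    cases j using Fin.cases with
    | zero => exact zero_mem _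
    | succ j => exact mem_homComp (hborder j) (hborder_hom j)
  | succ i =>
    cases j using Fin.cases with
    | zero => exact mem_homComp (by rw [← hborder i]; ring) (hborder_hom i)
    | succ j =>
      by_cases h : i = j
      · subst h
        simpa [quadricMatrix, borderedDiagonal] using
          mem_homComp (by rw [← hdiag i]; ring) (hdiag_hom i)
      · simp [quadricMatrix, borderedDiagonal, diagonal_apply_ne _ h]

variable {A : SymMat n r l l₀}

lemma qpoly_eq (hA : A.1 = quadricMatrix κ e m c) :
    qpoly A = 2 * linForm κ e ℂ * X (Sum.inr 0) + diagForm m c := by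
  simp only [qpoly, hA, quadricMatrix, map_borderedDiagonal, sum_borderedDiagonal]
  simp [linForm, diagForm, diagTerm, Fintype.sum_prod_type, Finset.sum_mul, mul_assoc]

lemma qpoly_eq_linearFamily (hA : A.1 = quadricMatrix κ e m c) :
    qpoly A = linearFamily (2 * linForm κ e ℚ * X (Sum.inr 0)) (diagTerm m ℚ) c := by
  simp [qpoly_eq hA, linearFamily, linForm, diagForm, diagTerm]

lemma fibreMatrix_mulVec_succ (hA : A.1 = quadricMatrix κ e m c) (x : Fin (n + 1) → ℂ)
    (z : Fin (r + 2) → ℂ) (j : Fin (r + 1)) :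
    (fibreMatrix A x *ᵥ z) j.succ =
      x (κ j) ^ e j * z 0 + (∑ k, c (j, k) * x k ^ m j) * z j.succ := by
  simp [mulVec, dotProduct, fibreMatrix, hA, quadricMatrix, borderedDiagonal, Fin.sum_univ_succ,
    diagonal_apply, apply_ite (eval x)]

lemma inr_succ_eq_zero (hA : A.1 = quadricMatrix κ e m c) (hc : AlgebraicIndependent ℚ c)
    {p : Fin (n + 1) ⊕ Fin (r + 2) → ℂ} (h0 : eval p (qpoly A) = 0)
    (h1 : ∀ v, eval p (pderiv v (qpoly A)) = 0 ∨ p v ∈ (algebraMap ℚ ℂ).range)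
    {k : Fin (n + 1)} (hk : p (Sum.inl k) ≠ 0) (j : Fin (r + 1)) : p (Sum.inr j.succ) = 0 := by
  rw [qpoly_eq_linearFamily hA] at h0 h1
  simpa [diagTerm, hk] using aeval_eq_zero_of_generic_linearFamily hc h0 h1 (j, k)

end Family

section Smooth

variable {κ : Fin (r + 1) → Fin (n + 1)} {e m : Fin (r + 1) → ℕ}
  {c : Fin (r + 1) × Fin (n + 1) → ℂ} {A : SymMat n r l l₀}

lemma fibreMatrix_mulVec_eq_zero (hA : A.1 = quadricMatrix κ e m c)
    (hc : AlgebraicIndependent ℚ c) {z : Fin (r + 2) → ℂ} (hz : fibreMatrix A 1 *ᵥ z = 0) :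
    z = 0 := by
  have hsucc (j : Fin (r + 1)) : z j.succ = 0 := by
    refine inr_succ_eq_zero (p := Sum.elim 1 z) hA hc (by simp [eval_qpoly, hz]) (fun v => ?_)
      (k := 0) (by simp) j
    cases v with
    | inl k => exact .inr ⟨1, by simp⟩
    | inr i => exact .inl (by simp [eval_pderiv_inr_qpoly, hz])
  have hzero : z 0 = 0 := by
    have h := congrFun hz (Fin.succ 0)
    rw [fibreMatrix_mulVec_succ hA, hsucc] at h
    simpa using h
  exact funext (Fin.cases hzero hsucc)

lemma isQuadricBundle_of_quadricMatrix (hκ : Function.Surjective κ)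
    (hA : A.1 = quadricMatrix κ e m c) (hc : AlgebraicIndependent ℚ c) : IsQuadricBundle A := by
  refine ⟨fun hdet => ?_, fun x hx => ?_⟩
  · have hfibre : (fibreMatrix A 1).det = 0 := by
      rw [← map_zero (eval 1), ← hdet, RingHom.map_det]
      rfl
    obtain ⟨z, hz, hz0⟩ := exists_mulVec_eq_zero_iff.2 hfibre
    exact hz (fibreMatrix_mulVec_eq_zero hA hc hz0)
  · obtain ⟨k, hk⟩ := Function.ne_iff.1 hx
    obtain ⟨j, rfl⟩ := hκ k
    exact ⟨0, j.succ, by simpa [hA, quadricMatrix, borderedDiagonal] using fun h => absurd h hk⟩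

lemma chartSub_eq_setToOne (i : Fin (n + 1)) (j : Fin (r + 2)) (F : Amb n r) :
    chartSub i j F = setToOne {Sum.inl i, Sum.inr j} F := by
  classical
  refine DFunLike.congr_fun (algHom_ext (f := aeval _) fun v => ?_) F
  simp [setToOne, Set.piecewise]

lemma exists_pderiv_qpoly_ne_zero (hκ : Function.Surjective κ) (hA : A.1 = quadricMatrix κ e m c)
    (hc : AlgebraicIndependent ℚ c) {p : Fin (n + 1) ⊕ Fin (r + 2) → ℂ} (h0 : eval p (qpoly A) = 0)
    {i : Fin (n + 1)} {j : Fin (r + 2)} (hi : p (Sum.inl i) = 1) (hj : p (Sum.inr j) = 1) :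
    ∃ v ∉ ({Sum.inl i, Sum.inr j} : Set (Fin (n + 1) ⊕ Fin (r + 2))),
      eval p (pderiv v (qpoly A)) ≠ 0 := by
  by_contra! hsing
  have hp : ∀ v ∈ ({Sum.inl i, Sum.inr j} : Set _), p v ∈ (algebraMap ℚ ℂ).range := by
    rintro v (rfl | rfl)
    · exact hi ▸ one_mem _
    · exact hj ▸ one_mem _
  have hsucc := inr_succ_eq_zero hA hc h0 (fun v => (em _).symm.imp (hsing v) (hp v))
    (hi ▸ one_ne_zero)
  cases j using Fin.cases with
  | succ j => exact one_ne_zero (hj.symm.trans (hsucc j))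
  | zero =>
    obtain ⟨j, rfl⟩ := hκ i
    simpa [eval_pderiv_inr_qpoly, fibreMatrix_mulVec_succ hA, hsucc, hi, hj] using
      hsing (Sum.inr j.succ)

lemma smoothTotalSpace_of_quadricMatrix (hκ : Function.Surjective κ)
    (hA : A.1 = quadricMatrix κ e m c) (hc : AlgebraicIndependent ℚ c) : SmoothTotalSpace A := by
  classical
  intro i j p h0
  rw [chartSub_eq_setToOne, eval_setToOne] at h0
  obtain ⟨v, hv, hne⟩ :=
    exists_pderiv_qpoly_ne_zero hκ hA hc (i := i) (j := j) h0 (by simp) (by simp)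
  exact ⟨v, by rwa [chartSub_eq_setToOne, pderiv_setToOne hv, eval_setToOne]⟩

end Smooth

section Rational

variable {κ : Fin (r + 1) → Fin (n + 1)} {e m : Fin (r + 1) → ℕ}
  {c : Fin (r + 1) × Fin (n + 1) → ℂ} {A : SymMat n r l l₀}

lemma linForm_mem_supported : linForm κ e ℂ ∈ supported ℂ {Sum.inr 0}ᶜ :=
  sum_mem fun _ _ => mul_mem (pow_mem (X_mem_supported.2 (by simp)) _)
    (X_mem_supported.2 (by simp))

lemma diagForm_mem_supported : diagForm m c ∈ supported ℂ {Sum.inr 0}ᶜ :=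
  sum_mem fun _ _ => mul_mem (Subalgebra.algebraMap_mem _ _)
    (mul_mem (pow_mem (X_mem_supported.2 (by simp)) _) (pow_mem (X_mem_supported.2 (by simp)) _))

variable {j₀ j₁ : Fin (r + 1)} {S : Set (Fin (n + 1) ⊕ Fin (r + 2))}

lemma irreducible_setToOne_linForm (hκ : κ j₁ ≠ κ j₀)
    (hS : S ⊆ {Sum.inl (κ j₀), Sum.inr j₀.succ}) : Irreducible (setToOne S (linForm κ e ℂ)) := by
  classical
  have hj : j₁ ≠ j₀ := fun h => hκ (h ▸ rfl)
  have hx : (Sum.inl (κ j₁) : Fin (n + 1) ⊕ Fin (r + 2)) ∉ S := fun h => by simpa [hκ] using hS h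
  have hz : (Sum.inr j₁.succ : Fin (n + 1) ⊕ Fin (r + 2)) ∉ S := fun h => by simpa [hj] using hS h
  set g : Amb n r := ∑ j ∈ Finset.univ.erase j₁, X (Sum.inl (κ j)) ^ e j * X (Sum.inr j.succ)
  have hL : setToOne S (linForm κ e ℂ) =
      X (Sum.inl (κ j₁)) ^ e j₁ * X (Sum.inr j₁.succ) + setToOne S g := by
    rw [linForm, ← Finset.add_sum_erase _ _ (Finset.mem_univ j₁), map_add, map_mul, map_pow,
      setToOne_X_of_notMem hx, setToOne_X_of_notMem hz]
  have hg : g ∈ supported ℂ {Sum.inr j₁.succ}ᶜ :=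
    sum_mem fun j hj => mul_mem (pow_mem (X_mem_supported.2 (by simp)) _)
      (X_mem_supported.2 (by simpa using Finset.ne_of_mem_erase hj))
  -- At the point `x_{κ(j₀)} = z_{j₀+1} = 1`, all other coordinates `0`, `x_{κ(j₁)}` vanishes
  -- while `g` does not.
  let p : Fin (n + 1) ⊕ Fin (r + 2) → ℂ := Sum.elim (Pi.single (κ j₀) 1) (Pi.single j₀.succ 1)
  have hp : ∀ v ∈ S, p v = 1 := fun v hv => by rcases hS hv with rfl | rfl <;> simp [p]
  have hgp : eval p g = 1 := by
    simp [g, p, Pi.single_apply, hj.symm]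
  rw [hL]
  refine irreducible_mul_X_add_of_eval X_prime.irreducible (X_mem_supported.2 (by simp))
    (setToOne_mem_supported hg) (p := p) (by simp [p, hκ]) ?_ _
  rw [eval_setToOne_of_forall_eq_one hp, hgp]
  exact one_ne_zero

lemma irreducible_setToOne_two_mul_linForm (hκ : κ j₁ ≠ κ j₀)
    (hS : S ⊆ {Sum.inl (κ j₀), Sum.inr j₀.succ}) :
    Irreducible (setToOne S (2 * linForm κ e ℂ)) := by
  have htwo : IsUnit (2 : Amb n r) := by
    rw [← map_ofNat C 2]
    exact (isUnit_of_invertible (2 : ℂ)).map C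
  rw [map_mul, map_ofNat, irreducible_isUnit_mul htwo]
  exact irreducible_setToOne_linForm hκ hS

lemma irreducible_setToOne_qpoly (hA : A.1 = quadricMatrix κ e m c)
    (hc : AlgebraicIndependent ℚ c) (hκ : κ j₁ ≠ κ j₀)
    (hS : S ⊆ {Sum.inl (κ j₀), Sum.inr j₀.succ}) : Irreducible (setToOne S (qpoly A)) := by
  classical
  have hj : j₀ ≠ j₁ := fun h => hκ (h ▸ rfl)
  have hw : (Sum.inr 0 : Fin (n + 1) ⊕ Fin (r + 2)) ∉ S := fun h => by
    simpa [(Fin.succ_ne_zero j₀).symm] using hS h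
  -- At the rational point with `x = (1, …, 1)`, `z_{j₀+1} = 1`, `z_{j₁+1} = -1` and other `zⱼ = 0`,
  -- `L` vanishes, and `Q` does not because `c` is generic.
  let p : Fin (n + 1) ⊕ Fin (r + 2) → ℂ :=
    Sum.elim 1 (Pi.single j₀.succ 1 - Pi.single j₁.succ 1)
  have hpS : ∀ v ∈ S, p v = 1 := fun v hv => by rcases hS hv with rfl | rfl <;> simp [p, hj]
  have hLp : eval p (linForm κ e ℂ) = 0 := by
    simp [linForm, p, Pi.single_apply]
  have hQp : eval p (diagForm m c) ≠ 0 := fun h => by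
    have hrat (v) : p v ∈ (algebraMap ℚ ℂ).range := by
      cases v with
      | inl k => exact one_mem _
      | inr i =>
        refine sub_mem ?_ ?_ <;> rw [Pi.single_apply] <;> split_ifs <;> simp
    have hz := inr_succ_eq_zero hA hc (p := p) (by simp [qpoly_eq hA, hLp, h])
      (fun v => .inr (hrat v)) (k := 0) one_ne_zero j₀
    simp [p, hj] at hz
  rw [qpoly_eq hA, map_add, map_mul, setToOne_X_of_notMem hw, ← pow_one (setToOne S _)]
  refine irreducible_mul_X_add_of_eval (irreducible_setToOne_two_mul_linForm hκ hS)
    (setToOne_mem_supported (mul_mem (ofNat_mem _ 2) linForm_mem_supported))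
    (setToOne_mem_supported diagForm_mem_supported) (p := p) ?_ ?_ 1
  · rw [eval_setToOne_of_forall_eq_one hpS, map_mul, hLp, mul_zero]
  · rwa [eval_setToOne_of_forall_eq_one hpS]

lemma isDomain_coneRing_of_quadricMatrix (hA : A.1 = quadricMatrix κ e m c)
    (hc : AlgebraicIndependent ℚ c) (hκ : κ j₁ ≠ κ j₀) : IsDomain (ConeRing A) := by
  have h := irreducible_setToOne_qpoly hA hc hκ (Set.empty_subset _)
  rw [setToOne_empty, AlgHom.id_apply] at h
  have := (Ideal.span_singleton_prime h.ne_zero).2 h.prime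
  exact Ideal.Quotient.isDomain _

lemma nonempty_fractionRing_chartRing_algEquiv (hA : A.1 = quadricMatrix κ e m c)
    (hc : AlgebraicIndependent ℚ c) (hκ : κ j₁ ≠ κ j₀) :
    Nonempty (FractionRing (ChartRing A (κ j₀) j₀.succ) ≃ₐ[ℂ] RatFF (n + r)) := by
  classical
  set S : Set (Fin (n + 1) ⊕ Fin (r + 2)) := {Sum.inl (κ j₀), Sum.inr j₀.succ} with hS
  have hideal : chartIdeal S (qpoly A) =
      Ideal.span {qpoly A, X (Sum.inl (κ j₀)) - 1, X (Sum.inr j₀.succ) - 1} := by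
    rw [chartIdeal, hS, Set.image_pair]
  suffices h : Nonempty (FractionRing (Amb n r ⧸ chartIdeal S (qpoly A)) ≃ₐ[ℂ] RatFF (n + r)) by
    rw [hideal] at h
    exact h
  have hw : Sum.inr 0 ∉ S := by simp [hS, (Fin.succ_ne_zero j₀).symm]
  have hcard : Nat.card ((insert (Sum.inr 0) S)ᶜ : Set (Fin (n + 1) ⊕ Fin (r + 2))) = n + r := by
    rw [Nat.card_coe_set_eq, Set.ncard_compl, Set.ncard_insert_of_notMem hw,
      Set.ncard_pair Sum.inl_ne_inr, Nat.card_sum, Nat.card_fin, Nat.card_fin]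
    lia
  have hq : Irreducible (setToOne S (qpoly A)) := irreducible_setToOne_qpoly hA hc hκ subset_rfl
  rw [qpoly_eq hA] at hq ⊢
  exact nonempty_fractionRing_quotient_chartIdeal_algEquiv hw
    (mul_mem (ofNat_mem _ 2) linForm_mem_supported) diagForm_mem_supported hq
    (irreducible_setToOne_two_mul_linForm hκ subset_rfl).ne_zero
    (Finite.equivFinOfCardEq hcard).symm

lemma isRationalQB_of_quadricMatrix (hA : A.1 = quadricMatrix κ e m c)
    (hc : AlgebraicIndependent ℚ c) (hκ : κ j₁ ≠ κ j₀) : IsRationalQB A :=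
  ⟨isDomain_coneRing_of_quadricMatrix hA hc hκ, _, _,
    nonempty_fractionRing_chartRing_algEquiv hA hc hκ⟩

end Rational

end QB

theorem exists_rational_smooth_quadric_bundle_general {n r : ℕ} (hn : 0 < n) (hrn : n ≤ r)
    (l : Fin (r + 2) → ℤ) (l₀ : ℤ) (hdiag : ∀ j : Fin (r + 1), 0 ≤ 2 * l j.succ + l₀)
    (hborder : ∀ j : Fin (r + 1), 0 ≤ l 0 + l j.succ + l₀) :
    ∃ A : QB.SymMat n r l l₀,
      QB.IsQuadricBundle A ∧ QB.SmoothTotalSpace A ∧ QB.IsRationalQB A := by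
  have : Nontrivial (Fin (n + 1)) := Fin.nontrivial_iff_two_le.2 (by lia)
  obtain ⟨κ, hκ⟩ : ∃ κ : Fin (r + 1) → Fin (n + 1), Function.Surjective κ :=
    ⟨_, Function.invFun_surjective (Fin.castLE_injective (Nat.succ_le_succ hrn))⟩
  obtain ⟨k, hk⟩ := exists_ne (κ 0)
  obtain ⟨j, rfl⟩ := hκ k
  obtain ⟨c, hc⟩ := exists_algebraicIndependent_rat_complex
    (ι := Fin (r + 1) × Fin (n + 1)) (Cardinal.mk_le_aleph0.trans Cardinal.aleph0_le_continuum)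
  choose e he using fun j => Int.eq_ofNat_of_zero_le (hborder j)
  choose m hm using fun j => Int.eq_ofNat_of_zero_le (hdiag j)
  let A : QB.SymMat n r l l₀ := ⟨QB.quadricMatrix κ e m c, QB.borderedDiagonal_symm _ _,
    QB.quadricMatrix_mem_homComp he hm⟩
  exact ⟨A, QB.isQuadricBundle_of_quadricMatrix hκ rfl hc,
    QB.smoothTotalSpace_of_quadricMatrix hκ rfl hc, QB.isRationalQB_of_quadricMatrix rfl hc hk⟩

/-- **Corollary (rational deformation types).**  Let `n, r` be positive integers with
`r ≥ n`, and let `(d_i)_{0 ≤ i ≤ r+1}` be non-negative integers of the same parity.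
Then there exists a smooth `r`-fold quadric bundle of type `(d_i)` over `ℙⁿ`
which is rational. -/
theorem exists_rational_smooth_quadric_bundle
    (n r : ℕ) (hn : 0 < n) (hr : 0 < r) (hrn : n ≤ r)
    (d : Fin (r+2) → ℤ)
    (hpos : ∀ i, 0 ≤ d i)
    (hparity : ∀ i j, Even (d i - d j)) :
    ∃ (l : Fin (r+2) → ℤ) (l₀ : ℤ), (∀ i, d i = 2 * l i + l₀) ∧
      ∃ A : QB.SymMat n r l l₀,
        QB.IsQuadricBundle A ∧ QB.SmoothTotalSpace A ∧ QB.IsRationalQB A := by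
  have hl (i) : d i = 2 * ((d i - d 0) / 2) + d 0 := by
    rw [Int.mul_ediv_cancel' (hparity i 0).two_dvd]
    ring
  refine ⟨fun i => (d i - d 0) / 2, d 0, hl, ?_⟩
  refine exists_rational_smooth_quadric_bundle_general hn hrn _ _ (fun j => hl j.succ ▸ hpos _)
    fun j => ?_
  have hj := hl j.succ
  have hd := hpos j.succ
  have hd₀ := hpos 0
  lia
end
end
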